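/- arXiv:1505.01388 — 4 statements merged into one kernel-verified Lean document; each statement's English description precedes it below -/
import Mathlib

section
/- Let α ∈ (1,2), let X be a real Banach space, and let {T(t)}_{t>0} be a family of bounded linear operators on X. Then {T(t)}_{t>0} is a Riemann-Liouville α-order fractional cosine function if and only if it is a Riemann-Liouville α-order fractional resolvent. -/
/-!
Write `g_β(t) = t ^ (β - 1) / Γ(β)`, `J^β` for the Riemann-Liouville integral, and `P_β(t)` for the
bounded operator `x ↦ J^β (T(·) x)(t)`. By the uniform boundedness principle, the limit at `0`,
which is the same condition in both definitions up to the factor `Γ(α - 1)`, bounds `‖T(t)‖` by a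
multiple of `t ^ (α - 2)` near `0`; all integrals then converge absolutely and Fubini applies.

Both functional equations are equivalent to the single equation

  `P₂(t) P_{2-α}(s) - P_{2-α}(t) P₂(s) = P₂(t) - P₂(s)`   (`EqE`).

*Cosine equation* (`cosEq_iff_eqE`). Let `U(t, s)` be the difference of its two sides. Integrating
`U` in `t`, integrating `U` in `s` and subtracting, everything symmetric cancels and what is left is
`Γ(2 - α)` times the defect of `EqE`. So the cosine equation implies `EqE`. Conversely, `EqE` says
that `U` has the same primitive `A` in `t` as in `s`; then `∂ₜA = ∂ₛA`, so `A` is constant on the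
lines `t + s = c`, and it vanishes at their endpoints, so `A = 0` and `U = 0`
(`eq_zero_of_integral_eq`).

*Resolvent equation* (`eqR_iff_eqE`, `resolvent_iff_eqR`). Let `EqR` be the resolvent equation
with each operator at time `t` to the left of each operator at time `s`. Applying `J^(2-α)` in `t`
and in `s` turns `EqR` into `EqE`, as `J^(2-α) J^α = J^2` and `J^(2-α) g_{α-1} = 1`; since `J^(2-α)`
is injective the two are equivalent. For a commuting family `EqR` is the resolvent equation, and
`EqR` alone forces commutation (`eqR_commute`): in terms of `a = J^α T` and `p = T - g_{α-1}` it
reads `a(t) p(s) = p(t) a(s)`, and a convolution argument shows that the commutator `[a(t), a(s)]`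
is annihilated by the injective operator `J^(α-1)`.
-/

open MeasureTheory Filter Topology Set

/-- Riemann-Liouville fractional integral of order `β` of `f` at `t`:
`J_t^β f(t) = (1/Γ(β)) ∫_0^t (t-σ)^{β-1} f(σ) dσ`. -/
noncomputable def RLint {X : Type*} [NormedAddCommGroup X] [NormedSpace ℝ X]
    (β t : ℝ) (f : ℝ → X) : X :=
  (Real.Gamma β)⁻¹ • ∫ σ in (0:ℝ)..t, (t - σ) ^ (β - 1) • f σ

/-- `{T(t)}_{t>0}` is a Riemann-Liouville `α`-order fractional cosine function. -/
def IsRLFracCosine {X : Type*} [NormedAddCommGroup X] [NormedSpace ℝ X]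
    (α : ℝ) (T : ℝ → X →L[ℝ] X) : Prop :=
  (∀ x : X, ContinuousOn (fun t => T t x) (Set.Ioi (0:ℝ))) ∧
  (∀ x : X, Tendsto (fun t : ℝ => t ^ (2 - α) • T t x) (𝓝[>] (0:ℝ))
      (𝓝 ((Real.Gamma (α - 1))⁻¹ • x))) ∧
  (∀ x : X, ∀ t > (0:ℝ), ∀ s > (0:ℝ),
    Real.Gamma (2 - α) • (∫ σ in (0:ℝ)..(t + s), T σ x) =
      (∫ σ in (0:ℝ)..t, ∫ τ in (0:ℝ)..s, (t - σ) ^ (1 - α) • T σ (T τ x)) +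
      (∫ σ in (0:ℝ)..t, ∫ τ in (0:ℝ)..s, (s - τ) ^ (1 - α) • T σ (T τ x)) -
      (∫ σ in (0:ℝ)..t, ∫ τ in (0:ℝ)..s, (t + s - σ - τ) ^ (1 - α) • T σ (T τ x)))

/-- `{T(t)}_{t>0}` is a Riemann-Liouville `α`-order fractional resolvent. -/
def IsRLFracResolvent {X : Type*} [NormedAddCommGroup X] [NormedSpace ℝ X]
    (α : ℝ) (T : ℝ → X →L[ℝ] X) : Prop :=
  (∀ x : X, ContinuousOn (fun t => T t x) (Set.Ioi (0:ℝ)) ∧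
    Tendsto (fun t : ℝ => (Real.Gamma (α - 1) * t ^ (2 - α)) • T t x) (𝓝[>] (0:ℝ)) (𝓝 x)) ∧
  (∀ t > (0:ℝ), ∀ s > (0:ℝ), ∀ x : X, T s (T t x) = T t (T s x)) ∧
  (∀ x : X, ∀ t > (0:ℝ), ∀ s > (0:ℝ),
    T s (RLint α t (fun σ => T σ x)) - RLint α s (fun σ => T σ (T t x)) =
      (s ^ (α - 2) / Real.Gamma (α - 1)) • RLint α t (fun σ => T σ x) -
      (t ^ (α - 2) / Real.Gamma (α - 1)) • RLint α s (fun σ => T σ x))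

section aux

set_option linter.unusedSectionVars false
variable {X : Type*} [NormedAddCommGroup X] [NormedSpace ℝ X]
variable {Y : Type*} [NormedAddCommGroup Y] [NormedSpace ℝ Y]

/-! ### Beta integrals and Fubini on a triangle -/

/-- Both endpoint singularities are integrable; the one at `t` is reflected to `0`. -/
lemma beta_integrable {γ δ t : ℝ} (hγ : 0 < γ) (hδ : 0 < δ) (ht : 0 < t) :
    IntervalIntegrable (fun σ : ℝ => (t - σ) ^ (γ - 1) * σ ^ (δ - 1)) volume 0 t := by
  have key : ∀ {γ δ : ℝ}, 0 < γ → 0 < δ →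
      IntervalIntegrable (fun σ : ℝ => (t - σ) ^ (γ - 1) * σ ^ (δ - 1)) volume 0 (t / 2) := by
    intro γ δ hγ hδ
    refine (intervalIntegral.intervalIntegrable_rpow' (r := δ - 1) (by linarith)).continuousOn_mul ?_
    intro σ hσ
    rw [uIcc_of_le (by positivity)] at hσ
    have : t - σ ≠ 0 := by linarith [hσ.2]
    exact ((continuousAt_const.sub continuousAt_id).rpow_const (Or.inl this)).continuousWithinAt
  refine (key hγ hδ).trans ?_
  have h := (key hδ hγ).comp_sub_left t
  simp only [sub_zero, sub_sub_cancel] at h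
  have e : t - t / 2 = t / 2 := by ring
  rw [e] at h
  exact (h.symm).congr (fun σ _ => mul_comm _ _)

lemma beta_integral {γ δ t : ℝ} (hγ : 0 < γ) (hδ : 0 < δ) (ht : 0 < t) :
    ∫ σ in (0:ℝ)..t, (t - σ) ^ (γ - 1) * σ ^ (δ - 1) =
      t ^ (γ + δ - 1) * (Real.Gamma γ * Real.Gamma δ / Real.Gamma (γ + δ)) := by
  have h := Complex.betaIntegral_scaled δ γ ht
  rw [Complex.betaIntegral_eq_Gamma_mul_div _ _ (by simpa using hδ) (by simpa using hγ)] at h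
  have h2 : ∫ σ in (0:ℝ)..t, (σ : ℂ) ^ ((δ : ℂ) - 1) * ((t : ℂ) - σ) ^ ((γ : ℂ) - 1)
      = ∫ σ in (0:ℝ)..t, (((t - σ) ^ (γ - 1) * σ ^ (δ - 1) : ℝ) : ℂ) := by
    refine intervalIntegral.integral_congr fun σ hσ => ?_
    rw [uIcc_of_le ht.le] at hσ
    push_cast [Complex.ofReal_cpow hσ.1, Complex.ofReal_cpow (sub_nonneg.2 hσ.2)]
    ring
  rw [h2, intervalIntegral.integral_ofReal] at h
  apply Complex.ofReal_injective
  rw [h]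
  push_cast [Complex.ofReal_cpow ht.le, ← Complex.Gamma_ofReal]
  rw [add_comm (δ : ℂ) γ]
  ring


/-- Integrability of the dominating function in `tri_swap`: the inner integral is a beta integral,
equal to a constant times `r ^ (γ + δ - 1)`, and so is the outer one. -/
lemma tri_integrable {β γ δ t : ℝ} (hβ : 0 < β) (hγ : 0 < γ) (hδ : 0 < δ) (ht : 0 < t) :
    Integrable ({p : ℝ × ℝ | 0 < p.2 ∧ p.2 < p.1 ∧ p.1 < t}.indicator
      (fun p : ℝ × ℝ => (t - p.1) ^ (β - 1) * ((p.1 - p.2) ^ (γ - 1) * p.2 ^ (δ - 1))))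
      (volume.prod volume) := by
  set S : Set (ℝ × ℝ) := {p : ℝ × ℝ | 0 < p.2 ∧ p.2 < p.1 ∧ p.1 < t} with hS
  have hSm : MeasurableSet S := by
    refine (measurableSet_lt measurable_const measurable_snd).inter
      ((measurableSet_lt measurable_snd measurable_fst).inter
        (measurableSet_lt measurable_fst measurable_const))
  have hslice : ∀ r σ : ℝ, S.indicator
      (fun p : ℝ × ℝ => (t - p.1) ^ (β - 1) * ((p.1 - p.2) ^ (γ - 1) * p.2 ^ (δ - 1))) (r, σ)
      = (Ioo 0 t).indicator (fun r => (t - r) ^ (β - 1)) r *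
        (Ioo 0 r).indicator (fun σ => (r - σ) ^ (γ - 1) * σ ^ (δ - 1)) σ := by
    intro r σ
    by_cases h1 : 0 < σ ∧ σ < r
    · by_cases h2 : r < t
      · rw [indicator_of_mem (show (r, σ) ∈ S from ⟨h1.1, h1.2, h2⟩),
          indicator_of_mem (show r ∈ Ioo 0 t from ⟨h1.1.trans h1.2, h2⟩),
          indicator_of_mem (show σ ∈ Ioo 0 r from h1)]
      · rw [indicator_of_notMem (show (r, σ) ∉ S from fun h => h2 h.2.2),
          indicator_of_notMem (show r ∉ Ioo 0 t from fun h => h2 h.2), zero_mul]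
    · rw [indicator_of_notMem (show (r, σ) ∉ S from fun h => h1 ⟨h.1, h.2.1⟩),
          indicator_of_notMem (show σ ∉ Ioo 0 r from h1), mul_zero]
  have hin : ∀ r : ℝ, 0 < r → Integrable
      ((Ioo 0 r).indicator (fun σ => (r - σ) ^ (γ - 1) * σ ^ (δ - 1))) := by
    intro r hr
    rw [integrable_indicator_iff measurableSet_Ioo]
    exact ((intervalIntegrable_iff_integrableOn_Ioo_of_le hr.le).1 (beta_integrable hγ hδ hr))
  have hmeas : Measurable (S.indicator
      (fun p : ℝ × ℝ => (t - p.1) ^ (β - 1) * ((p.1 - p.2) ^ (γ - 1) * p.2 ^ (δ - 1)))) :=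
    Measurable.indicator (by fun_prop) hSm
  rw [integrable_prod_iff hmeas.aestronglyMeasurable]
  refine ⟨Eventually.of_forall fun r => ?_, ?_⟩
  · simp only [hslice]
    by_cases hr : 0 < r
    · exact (hin r hr).const_mul _
    · rw [indicator_of_notMem (show r ∉ Ioo 0 t from fun h => hr h.1)]
      simp
  · have : (fun r => ∫ σ, ‖S.indicator
        (fun p : ℝ × ℝ => (t - p.1) ^ (β - 1) * ((p.1 - p.2) ^ (γ - 1) * p.2 ^ (δ - 1))) (r, σ)‖)
        = (Ioo 0 t).indicator (fun r => ((t - r) ^ (β - 1) * r ^ (γ + δ - 1)) *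
          (Real.Gamma γ * Real.Gamma δ / Real.Gamma (γ + δ))) := by
      funext r
      simp only [hslice, norm_mul]
      rw [integral_const_mul]
      by_cases hr : r ∈ Ioo 0 t
      · rw [indicator_of_mem hr, indicator_of_mem hr, mul_assoc, ← beta_integral hγ hδ hr.1,
          Real.norm_of_nonneg (Real.rpow_nonneg (by linarith [hr.2]) _),
          intervalIntegral.integral_of_le hr.1.le, integral_Ioc_eq_integral_Ioo,
          ← integral_indicator measurableSet_Ioo]
        congr 2
        funext σ
        rw [Real.norm_of_nonneg]
        refine indicator_nonneg (fun σ hσ => ?_) σ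
        exact mul_nonneg (Real.rpow_nonneg (by linarith [hσ.2]) _)
          (Real.rpow_nonneg hσ.1.le _)
      · simp [indicator_of_notMem hr]
    rw [this, integrable_indicator_iff measurableSet_Ioo]
    exact ((intervalIntegrable_iff_integrableOn_Ioo_of_le ht.le).1
      (beta_integrable hβ (by linarith : 0 < γ + δ) ht)).mul_const _

/-- Fubini on the triangle `0 < σ < r < t`, for an integrand dominated by a product of powers of
the three gaps `t - r`, `r - σ`, `σ`. -/
lemma tri_swap {β γ δ t C : ℝ} (hβ : 0 < β) (hγ : 0 < γ) (hδ : 0 < δ) (ht : 0 < t)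
    (Φ : ℝ → ℝ → X)
    (hm : ContinuousOn (fun p : ℝ × ℝ => Φ p.1 p.2) {p | 0 < p.2 ∧ p.2 < p.1 ∧ p.1 < t})
    (hb : ∀ r σ, 0 < σ → σ < r → r < t →
      ‖Φ r σ‖ ≤ C * ((t - r) ^ (β - 1) * ((r - σ) ^ (γ - 1) * σ ^ (δ - 1)))) :
    ∫ r in (0:ℝ)..t, ∫ σ in (0:ℝ)..r, Φ r σ = ∫ σ in (0:ℝ)..t, ∫ r in σ..t, Φ r σ := by
  set S : Set (ℝ × ℝ) := {p : ℝ × ℝ | 0 < p.2 ∧ p.2 < p.1 ∧ p.1 < t} with hS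
  have hSm : MeasurableSet S := by
    refine (measurableSet_lt measurable_const measurable_snd).inter
      ((measurableSet_lt measurable_snd measurable_fst).inter
        (measurableSet_lt measurable_fst measurable_const))
  set Ψ : ℝ → ℝ → X := fun r σ => S.indicator (fun p : ℝ × ℝ => Φ p.1 p.2) (r, σ) with hΨ
  have hint : Integrable (Function.uncurry Ψ) (volume.prod volume) := by
    refine ((tri_integrable hβ hγ hδ ht).const_mul C).mono' ?_ ?_
    · have := (hm.aestronglyMeasurable hSm (μ := (volume.prod volume : Measure (ℝ × ℝ))))
      exact (aestronglyMeasurable_indicator_iff hSm).2 this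
    · refine Eventually.of_forall fun p => ?_
      change ‖S.indicator (fun p : ℝ × ℝ => Φ p.1 p.2) p‖ ≤ _
      by_cases hp : p ∈ S
      · rw [indicator_of_mem hp, indicator_of_mem hp]
        exact hb _ _ hp.1 hp.2.1 hp.2.2
      · rw [indicator_of_notMem hp, indicator_of_notMem hp]
        simp
  have hsw := integral_integral_swap hint
  have h1 : ∫ r in (0:ℝ)..t, ∫ σ in (0:ℝ)..r, Φ r σ = ∫ r, ∫ σ, Ψ r σ := by
    rw [intervalIntegral.integral_of_le ht.le, integral_Ioc_eq_integral_Ioo,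
      ← integral_indicator measurableSet_Ioo]
    congr 1
    funext r
    by_cases hr : r ∈ Ioo 0 t
    · rw [indicator_of_mem hr, intervalIntegral.integral_of_le hr.1.le,
        integral_Ioc_eq_integral_Ioo, ← integral_indicator measurableSet_Ioo]
      congr 1
      funext σ
      by_cases hσ : σ ∈ Ioo 0 r
      · rw [indicator_of_mem hσ, hΨ]
        exact (indicator_of_mem (show (r, σ) ∈ S from ⟨hσ.1, hσ.2, hr.2⟩)
          (fun p : ℝ × ℝ => Φ p.1 p.2)).symm
      · rw [indicator_of_notMem hσ, hΨ]
        exact (indicator_of_notMem (show (r, σ) ∉ S from fun h => hσ ⟨h.1, h.2.1⟩) _).symm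
    · rw [indicator_of_notMem hr]
      have : ∀ σ, Ψ r σ = 0 := fun σ => indicator_of_notMem
        (show (r, σ) ∉ S from fun h => hr ⟨h.1.trans h.2.1, h.2.2⟩) _
      simp [this]
  have h2 : ∫ σ in (0:ℝ)..t, ∫ r in σ..t, Φ r σ = ∫ σ, ∫ r, Ψ r σ := by
    rw [intervalIntegral.integral_of_le ht.le, integral_Ioc_eq_integral_Ioo,
      ← integral_indicator measurableSet_Ioo]
    congr 1
    funext σ
    by_cases hσ : σ ∈ Ioo 0 t
    · rw [indicator_of_mem hσ, intervalIntegral.integral_of_le hσ.2.le,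
        integral_Ioc_eq_integral_Ioo, ← integral_indicator measurableSet_Ioo]
      congr 1
      funext r
      by_cases hr : r ∈ Ioo σ t
      · rw [indicator_of_mem hr, hΨ]
        exact (indicator_of_mem (show (r, σ) ∈ S from ⟨hσ.1, hr.1, hr.2⟩)
          (fun p : ℝ × ℝ => Φ p.1 p.2)).symm
      · rw [indicator_of_notMem hr, hΨ]
        exact (indicator_of_notMem (show (r, σ) ∉ S from fun h => hr ⟨h.2.1, h.2.2⟩) _).symm
    · rw [indicator_of_notMem hσ]
      have : ∀ r, Ψ r σ = 0 := fun r => indicator_of_notMem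
        (show (r, σ) ∉ S from fun h => hσ ⟨h.1, h.2.1.trans h.2.2⟩) _
      simp [this]
  rw [h1, h2, hsw]

/-! ### Riemann-Liouville integrals of functions with a power singularity at zero -/

/-- `f` is continuous on `(0, ∞)` and `O(t ^ (γ - 1))` on every bounded interval `(0, b]`. For
`γ > 0` such functions are locally integrable up to `0`, and all Riemann-Liouville integrals are
taken within this class. -/
structure RLAdm (γ : ℝ) (f : ℝ → X) : Prop where
  cont : ContinuousOn f (Ioi 0)
  bound : ∀ b : ℝ, ∃ M : ℝ, ∀ t, 0 < t → t ≤ b → ‖f t‖ ≤ M * t ^ (γ - 1)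

lemma kernel_contOn (β t : ℝ) :
    ContinuousOn (fun σ : ℝ => (t - σ) ^ (β - 1)) (Ioo 0 t) := by
  intro σ hσ
  have : t - σ ≠ 0 := by linarith [hσ.2]
  exact ((continuousAt_const.sub continuousAt_id).rpow_const (Or.inl this)).continuousWithinAt

lemma integrable_of_bound {f : ℝ → X} {g : ℝ → ℝ} {t : ℝ} (ht : 0 < t)
    (hf : ContinuousOn f (Ioo 0 t)) (hg : IntervalIntegrable g volume 0 t)
    (hb : ∀ σ, 0 < σ → σ < t → ‖f σ‖ ≤ g σ) : IntervalIntegrable f volume 0 t := by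
  rw [intervalIntegrable_iff_integrableOn_Ioo_of_le ht.le] at hg ⊢
  refine Integrable.mono' hg (hf.aestronglyMeasurable measurableSet_Ioo) ?_
  exact (ae_restrict_iff' measurableSet_Ioo).2 (Eventually.of_forall fun σ hσ => hb σ hσ.1 hσ.2)

namespace RLAdm

variable {γ : ℝ} {f g : ℝ → X}

lemma kernel_integrable (hf : RLAdm γ f) (hγ : 0 < γ) {β t : ℝ} (hβ : 0 < β) (ht : 0 < t) :
    IntervalIntegrable (fun σ => (t - σ) ^ (β - 1) • f σ) volume 0 t := by
  obtain ⟨M, hM⟩ := hf.bound t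
  refine integrable_of_bound ht
    ((kernel_contOn β t).smul (hf.cont.mono fun σ hσ => hσ.1))
    ((beta_integrable hβ hγ ht).const_mul M) fun σ h0 h1 => ?_
  rw [norm_smul, Real.norm_of_nonneg (Real.rpow_nonneg (by linarith) _)]
  calc _ ≤ (t - σ) ^ (β - 1) * (M * σ ^ (γ - 1)) :=
        mul_le_mul_of_nonneg_left (hM σ h0 h1.le) (Real.rpow_nonneg (by linarith) _)
    _ = _ := by ring

lemma integrable (hf : RLAdm γ f) (hγ : 0 < γ) {t : ℝ} (ht : 0 < t) :
    IntervalIntegrable f volume 0 t := by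
  simpa using hf.kernel_integrable hγ one_pos ht

lemma clm (hf : RLAdm γ f) (B : X →L[ℝ] Y) : RLAdm γ (fun t => B (f t)) where
  cont := B.continuous.comp_continuousOn hf.cont
  bound b := by
    obtain ⟨M, hM⟩ := hf.bound b
    refine ⟨‖B‖ * M, fun t h0 h1 => ?_⟩
    calc _ ≤ ‖B‖ * ‖f t‖ := B.le_opNorm _
      _ ≤ ‖B‖ * (M * t ^ (γ - 1)) := by gcongr; exact hM t h0 h1
      _ = _ := by ring

lemma add (hf : RLAdm γ f) (hg : RLAdm γ g) : RLAdm γ (fun t => f t + g t) where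
  cont := hf.cont.add hg.cont
  bound b := by
    obtain ⟨M, hM⟩ := hf.bound b
    obtain ⟨M', hM'⟩ := hg.bound b
    refine ⟨M + M', fun t h0 h1 => (norm_add_le _ _).trans ?_⟩
    rw [add_mul]
    exact add_le_add (hM t h0 h1) (hM' t h0 h1)

lemma neg (hf : RLAdm γ f) : RLAdm γ (fun t => - f t) where
  cont := hf.cont.neg
  bound b := by simpa using hf.bound b

lemma sub (hf : RLAdm γ f) (hg : RLAdm γ g) : RLAdm γ (fun t => f t - g t) := by
  simpa [sub_eq_add_neg] using hf.add hg.neg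

lemma rpow_smul (γ c : ℝ) (x : X) : RLAdm γ (fun t : ℝ => (t ^ (γ - 1) / c) • x) where
  cont := by
    intro t ht
    exact (((continuousAt_id.rpow_const (Or.inl (ne_of_gt ht))).div_const c).smul
      continuousAt_const).continuousWithinAt
  bound b := by
    refine ⟨|c|⁻¹ * ‖x‖, fun t h0 _ => ?_⟩
    rw [norm_smul, norm_div, Real.norm_of_nonneg (Real.rpow_nonneg h0.le _), Real.norm_eq_abs]
    apply le_of_eq
    ring

lemma const (hγ : γ ≤ 1) (x : X) : RLAdm γ (fun _ : ℝ => x) where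
  cont := continuousOn_const
  bound b := by
    refine ⟨‖x‖ * b ^ (1 - γ), fun t h0 h1 => ?_⟩
    have : 1 ≤ b ^ (1 - γ) * t ^ (γ - 1) := by
      calc (1:ℝ) = t ^ (1 - γ) * t ^ (γ - 1) := by
            rw [← Real.rpow_add h0]; simp
        _ ≤ _ := by
            gcongr
    calc ‖x‖ = ‖x‖ * 1 := by ring
      _ ≤ ‖x‖ * (b ^ (1 - γ) * t ^ (γ - 1)) := by gcongr
      _ = _ := by ring

/-- The substitution `σ = t u` fixes the interval of integration, which makes continuity in `t` a
matter of dominated convergence. -/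
lemma RLint_scale {β t : ℝ} (f : ℝ → X) (ht : 0 < t) :
    RLint β t f = (Real.Gamma β)⁻¹ • t ^ β • ∫ u in (0:ℝ)..1, (1 - u) ^ (β - 1) • f (t * u) := by
  rw [RLint]
  congr 1
  have h := intervalIntegral.integral_comp_mul_left (a := 0) (b := 1)
    (fun σ => (t - σ) ^ (β - 1) • f σ) ht.ne'
  rw [mul_zero, mul_one] at h
  rw [← smul_inv_smul₀ ht.ne' (∫ σ in (0:ℝ)..t, (t - σ) ^ (β - 1) • f σ), ← h, ← intervalIntegral.integral_smul, ← intervalIntegral.integral_smul]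
  refine intervalIntegral.integral_congr fun u hu => ?_
  rw [uIcc_of_le zero_le_one] at hu
  simp only [smul_smul]
  congr 1
  rw [show t - t * u = t * (1 - u) by ring, Real.mul_rpow ht.le (by linarith [hu.2]),
    ← mul_assoc]
  congr 1
  nth_rewrite 1 [← Real.rpow_one t]
  rw [← Real.rpow_add ht]
  congr 1
  ring

/-- Riemann-Liouville integration preserves the class `RLAdm γ`. -/
lemma rl (hf : RLAdm γ f) (hγ : 0 < γ) {β : ℝ} (hβ : 0 < β) :
    RLAdm γ (fun t => RLint β t f) where
  cont := by
    intro t₀ ht₀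
    have ht₀' : 0 < t₀ := ht₀
    apply ContinuousAt.continuousWithinAt
    have hev : (fun t => RLint β t f) =ᶠ[𝓝 t₀] fun t => (Real.Gamma β)⁻¹ • t ^ β •
        ∫ u in (0:ℝ)..1, (1 - u) ^ (β - 1) • f (t * u) := by
      filter_upwards [lt_mem_nhds ht₀'] with t ht using RLint_scale f ht
    refine ContinuousAt.congr_of_eventuallyEq ?_ hev
    refine continuousAt_const.smul
      ((continuousAt_id.rpow_const (Or.inl ht₀'.ne')).smul ?_)
    obtain ⟨M, hM⟩ := hf.bound (t₀ + 1)
    have hpow : ∀ᶠ t in 𝓝 t₀, t ^ (γ - 1) < t₀ ^ (γ - 1) + 1 :=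
      (Real.continuousAt_rpow_const t₀ (γ - 1) (Or.inl ht₀'.ne')).eventually
        (gt_mem_nhds (by linarith))
    refine intervalIntegral.continuousAt_of_dominated_interval
      (bound := fun u => (|M| * (t₀ ^ (γ - 1) + 1)) * ((1 - u) ^ (β - 1) * u ^ (γ - 1))) ?_ ?_
      ((beta_integrable hβ hγ one_pos).const_mul _) ?_
    · filter_upwards [lt_mem_nhds ht₀'] with t ht
      rw [uIoc_of_le zero_le_one, ← restrict_Ioo_eq_restrict_Ioc]
      refine ContinuousOn.aestronglyMeasurable ?_ measurableSet_Ioo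
      refine (kernel_contOn β 1).smul (hf.cont.comp (by fun_prop) ?_)
      exact fun u hu => mul_pos ht hu.1
    · filter_upwards [lt_mem_nhds ht₀', hpow, gt_mem_nhds (lt_add_one t₀)] with t ht hp hlt
      refine Eventually.of_forall fun u hu => ?_
      rw [uIoc_of_le zero_le_one] at hu
      have hu1 : 0 ≤ (1 - u) ^ (β - 1) := Real.rpow_nonneg (by linarith [hu.2]) _
      have hu2 : 0 ≤ u ^ (γ - 1) := Real.rpow_nonneg hu.1.le _
      have hle : ‖f (t * u)‖ ≤ M * (t * u) ^ (γ - 1) := by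
        refine hM _ (mul_pos ht hu.1) ?_
        nlinarith [hu.2, hu.1]
      rw [Real.mul_rpow ht.le hu.1.le] at hle
      rw [norm_smul, Real.norm_of_nonneg hu1]
      have : M * (t ^ (γ - 1) * u ^ (γ - 1)) ≤ |M| * ((t₀ ^ (γ - 1) + 1) * u ^ (γ - 1)) := by
        gcongr
        exact le_abs_self M
      calc _ ≤ (1 - u) ^ (β - 1) * (|M| * ((t₀ ^ (γ - 1) + 1) * u ^ (γ - 1))) := by
            gcongr; exact hle.trans this
        _ = _ := by ring
    · refine Eventually.of_forall fun u hu => ?_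
      rw [uIoc_of_le zero_le_one] at hu
      refine continuousAt_const.smul (ContinuousAt.comp ?_ (by fun_prop))
      exact hf.cont.continuousAt (Ioi_mem_nhds (mul_pos ht₀' hu.1))
  bound b := by
    obtain ⟨M, hM⟩ := hf.bound b
    set B := Real.Gamma β * Real.Gamma γ / Real.Gamma (β + γ) with hB
    have hBpos : 0 ≤ B := by
      have := Real.Gamma_pos_of_pos hβ
      have := Real.Gamma_pos_of_pos hγ
      have := Real.Gamma_pos_of_pos (add_pos hβ hγ)
      positivity
    have hG := Real.Gamma_pos_of_pos hβ
    refine ⟨(Real.Gamma β)⁻¹ * (|M| * (B * b ^ β)), fun t h0 h1 => ?_⟩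
    rw [RLint, norm_smul, Real.norm_of_nonneg (by positivity), mul_assoc]
    gcongr
    calc _ ≤ ∫ σ in (0:ℝ)..t, |M| * ((t - σ) ^ (β - 1) * σ ^ (γ - 1)) := by
          refine intervalIntegral.norm_integral_le_of_norm_le h0.le ?_
            ((beta_integrable hβ hγ h0).const_mul _)
          refine Eventually.of_forall fun σ hσ => ?_
          have hσ1 : 0 ≤ (t - σ) ^ (β - 1) := Real.rpow_nonneg (by linarith [hσ.2]) _
          have hσ2 : 0 ≤ σ ^ (γ - 1) := Real.rpow_nonneg hσ.1.le _
          rw [norm_smul, Real.norm_of_nonneg hσ1]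
          calc _ ≤ (t - σ) ^ (β - 1) * (|M| * σ ^ (γ - 1)) := by
                gcongr
                refine (hM σ hσ.1 (hσ.2.trans h1)).trans ?_
                gcongr
                exact le_abs_self M
            _ = _ := by ring
      _ = |M| * (t ^ (β + γ - 1) * B) := by
          rw [intervalIntegral.integral_const_mul, beta_integral hβ hγ h0]
      _ = |M| * (B * t ^ β) * t ^ (γ - 1) := by
          rw [show β + γ - 1 = β + (γ - 1) by ring, Real.rpow_add h0]; ring
      _ ≤ _ := by gcongr

end RLAdm

lemma RLint_clm {γ β t : ℝ} {f : ℝ → X} [CompleteSpace X] [CompleteSpace Y]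
    (hf : RLAdm γ f) (hγ : 0 < γ) (hβ : 0 < β)
    (ht : 0 < t) (B : X →L[ℝ] Y) : RLint β t (fun σ => B (f σ)) = B (RLint β t f) := by
  rw [RLint, RLint, map_smul, ← B.intervalIntegral_comp_comm (hf.kernel_integrable hγ hβ ht)]
  simp

lemma RLint_add {γ β t : ℝ} {f g : ℝ → X} (hf : RLAdm γ f) (hg : RLAdm γ g) (hγ : 0 < γ)
    (hβ : 0 < β) (ht : 0 < t) :
    RLint β t (fun σ => f σ + g σ) = RLint β t f + RLint β t g := by
  simp only [RLint, smul_add]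
  rw [intervalIntegral.integral_add (hf.kernel_integrable hγ hβ ht)
    (hg.kernel_integrable hγ hβ ht), smul_add]

lemma RLint_sub {γ β t : ℝ} {f g : ℝ → X} (hf : RLAdm γ f) (hg : RLAdm γ g) (hγ : 0 < γ)
    (hβ : 0 < β) (ht : 0 < t) :
    RLint β t (fun σ => f σ - g σ) = RLint β t f - RLint β t g := by
  simp only [RLint, smul_sub]
  rw [intervalIntegral.integral_sub (hf.kernel_integrable hγ hβ ht)
    (hg.kernel_integrable hγ hβ ht), smul_sub]

lemma RLint_congr {β t : ℝ} {f g : ℝ → X} (ht : 0 < t) (h : ∀ σ, 0 < σ → f σ = g σ) :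
    RLint β t f = RLint β t g := by
  rw [RLint, RLint]
  congr 1
  rw [intervalIntegral.integral_of_le ht.le, intervalIntegral.integral_of_le ht.le]
  refine setIntegral_congr_fun measurableSet_Ioc fun σ hσ => ?_
  simp only [h σ hσ.1]

lemma RLint_zero (β t : ℝ) : RLint β t (fun _ => (0 : X)) = 0 := by
  simp [RLint]

lemma RLint_one (t : ℝ) (f : ℝ → X) : RLint 1 t f = ∫ σ in (0:ℝ)..t, f σ := by
  simp [RLint]

/-- `J^β g_γ = g_(β + γ)` for the power functions `g_γ(t) = t ^ (γ - 1) / Γ(γ)`. -/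
lemma RLint_rpow [CompleteSpace X] {β γ t : ℝ} (hβ : 0 < β) (hγ : 0 < γ) (ht : 0 < t) (x : X) :
    RLint β t (fun σ => (σ ^ (γ - 1) / Real.Gamma γ) • x) =
      (t ^ (β + γ - 1) / Real.Gamma (β + γ)) • x := by
  have h1 := (Real.Gamma_pos_of_pos hβ).ne'
  have h2 := (Real.Gamma_pos_of_pos hγ).ne'
  have h3 := (Real.Gamma_pos_of_pos (add_pos hβ hγ)).ne'
  rw [RLint]
  simp only [smul_smul, mul_div_assoc']
  rw [intervalIntegral.integral_smul_const, intervalIntegral.integral_div,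
    beta_integral hβ hγ ht, smul_smul]
  congr 1
  field_simp

/-- The semigroup property `J^β J^β' = J^(β + β')`. -/
lemma RLint_RLint [CompleteSpace X] {γ β β' t : ℝ} {f : ℝ → X} (hf : RLAdm γ f) (hγ : 0 < γ)
    (hβ : 0 < β) (hβ' : 0 < β') (ht : 0 < t) :
    RLint β t (fun r => RLint β' r f) = RLint (β + β') t f := by
  have h1 := (Real.Gamma_pos_of_pos hβ).ne'
  have h2 := (Real.Gamma_pos_of_pos hβ').ne'
  have h3 := (Real.Gamma_pos_of_pos (add_pos hβ hβ')).ne'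
  obtain ⟨M, hM⟩ := hf.bound t
  have hsw := tri_swap (C := M) hβ hβ' hγ ht
    (fun r σ => ((t - r) ^ (β - 1) * (r - σ) ^ (β' - 1)) • f σ) ?_ ?_
  · have hl : RLint β t (fun r => RLint β' r f) = (Real.Gamma β)⁻¹ • (Real.Gamma β')⁻¹ •
        ∫ r in (0:ℝ)..t, ∫ σ in (0:ℝ)..r, ((t - r) ^ (β - 1) * (r - σ) ^ (β' - 1)) • f σ := by
      simp only [RLint, mul_smul, intervalIntegral.integral_smul]
      simp only [smul_comm ((t - _) ^ (β - 1)) (Real.Gamma β')⁻¹, intervalIntegral.integral_smul]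
    rw [hl, hsw, RLint, smul_smul]
    have hin : ∀ σ ∈ uIoo 0 t, ∫ r in σ..t, ((t - r) ^ (β - 1) * (r - σ) ^ (β' - 1)) • f σ =
        (Real.Gamma β * Real.Gamma β' / Real.Gamma (β + β')) •
          ((t - σ) ^ (β + β' - 1) • f σ) := by
      intro σ hσ
      rw [uIoo_of_le ht.le] at hσ
      rw [intervalIntegral.integral_smul_const, smul_smul]
      congr 1
      rw [mul_comm, ← beta_integral hβ hβ' (sub_pos.2 hσ.2)]
      have := intervalIntegral.integral_comp_sub_right (a := σ) (b := t)
        (fun u => (t - σ - u) ^ (β - 1) * u ^ (β' - 1)) σ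
      rw [sub_self] at this
      rw [← this]
      simp
    rw [intervalIntegral.integral_congr_uIoo hin, intervalIntegral.integral_smul, smul_smul]
    congr 1
    field_simp
  · refine ContinuousOn.smul (ContinuousOn.mul ?_ ?_) (hf.cont.comp continuousOn_snd ?_)
    · exact ContinuousOn.rpow_const (by fun_prop) fun p hp => Or.inl (by linarith [hp.2.2])
    · exact ContinuousOn.rpow_const (by fun_prop) fun p hp => Or.inl (by linarith [hp.2.1])
    · exact fun p hp => hp.1
  · intro r σ h0 h1 h2
    have k1 : 0 ≤ (t - r) ^ (β - 1) := Real.rpow_nonneg (by linarith) _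
    have k2 : 0 ≤ (r - σ) ^ (β' - 1) := Real.rpow_nonneg (by linarith) _
    rw [norm_smul, Real.norm_of_nonneg (mul_nonneg k1 k2)]
    calc _ ≤ ((t - r) ^ (β - 1) * (r - σ) ^ (β' - 1)) * (M * σ ^ (γ - 1)) := by
          gcongr; exact hM σ h0 (by linarith)
      _ = _ := by ring

lemma RLint_one_inj [CompleteSpace X] {γ : ℝ} {f : ℝ → X} (hf : RLAdm γ f) (hγ : 0 < γ)
    (h : ∀ t, 0 < t → RLint 1 t f = 0) {t : ℝ} (ht : 0 < t) : f t = 0 := by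
  have hd : HasDerivAt (fun t => ∫ σ in (0:ℝ)..t, f σ) (f t) t := by
    refine intervalIntegral.integral_hasDerivAt_right (hf.integrable hγ ht) ?_
      (hf.cont.continuousAt (Ioi_mem_nhds ht))
    exact hf.cont.stronglyMeasurableAtFilter isOpen_Ioi t ht
  have h0 : (fun t => ∫ σ in (0:ℝ)..t, f σ) =ᶠ[𝓝 t] fun _ => 0 := by
    filter_upwards [lt_mem_nhds ht] with s hs
    rw [← RLint_one]; exact h s hs
  exact hd.unique ((hasDerivAt_const t (0 : X)).congr_of_eventuallyEq h0)

/-- `J^β` is injective: applying `J^(2 - β)` to `J^β f = 0` gives `J^2 f = 0`, and `J^2 f` can be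
differentiated twice. -/
lemma RLint_inj [CompleteSpace X] {γ β : ℝ} {f : ℝ → X} (hf : RLAdm γ f) (hγ : 0 < γ)
    (hβ : 0 < β) (hβ2 : β < 2)
    (h : ∀ t, 0 < t → RLint β t f = 0) {t : ℝ} (ht : 0 < t) : f t = 0 := by
  have h2 : ∀ t, 0 < t → RLint 1 t (fun r => RLint 1 r f) = 0 := by
    intro t ht
    rw [RLint_RLint hf hγ one_pos one_pos ht, show (1 + 1 : ℝ) = (2 - β) + β by ring,
      ← RLint_RLint hf hγ (by linarith) hβ ht, RLint_congr ht h, RLint_zero]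
  exact RLint_one_inj hf hγ (fun r hr => RLint_one_inj (hf.rl hγ one_pos) hγ h2 hr) ht

lemma RLAdm.congr {γ : ℝ} {f g : ℝ → X} (hf : RLAdm γ f) (h : ∀ t, 0 < t → f t = g t) :
    RLAdm γ g where
  cont := hf.cont.congr fun t ht => (h t ht).symm
  bound b := by
    obtain ⟨M, hM⟩ := hf.bound b
    exact ⟨M, fun t h0 h1 => by rw [← h t h0]; exact hM t h0 h1⟩

/-! ### Operator families and their Riemann-Liouville integrals -/

/-- A strongly continuous family on `(0, ∞)` whose operator norm is `O(t ^ (γ - 1))` on every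
bounded interval `(0, b]`. -/
structure RLFam (γ : ℝ) (T : ℝ → X →L[ℝ] X) : Prop where
  cont : ∀ x, ContinuousOn (fun t => T t x) (Ioi 0)
  bound : ∀ b : ℝ, ∃ M : ℝ, 0 ≤ M ∧ ∀ t, 0 < t → t ≤ b → ∀ x, ‖T t x‖ ≤ M * t ^ (γ - 1) * ‖x‖

/-- The uniform boundedness principle turns the pointwise limit at `0` into the operator bound. -/
lemma RLFam.of_tendsto [CompleteSpace X] {γ c : ℝ} {T : ℝ → X →L[ℝ] X}
    (hc : ∀ x, ContinuousOn (fun t => T t x) (Ioi 0))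
    (hl : ∀ x, Tendsto (fun t : ℝ => t ^ (1 - γ) • T t x) (𝓝[>] 0) (𝓝 (c • x))) :
    RLFam γ T := by
  refine ⟨hc, fun b => ?_⟩
  have hpt : ∀ x, ∃ C, ∀ i : {t : ℝ // 0 < t ∧ t ≤ b}, ‖((i : ℝ) ^ (1 - γ) • T i) x‖ ≤ C := by
    intro x
    have h1 : ∀ᶠ t in 𝓝[>] (0:ℝ), ‖t ^ (1 - γ) • T t x‖ < ‖c • x‖ + 1 :=
      (hl x).norm.eventually (gt_mem_nhds (lt_add_one _))
    obtain ⟨ε, hε, hε'⟩ := mem_nhdsGT_iff_exists_Ioo_subset.1 h1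
    have hcont : ContinuousOn (fun t : ℝ => t ^ (1 - γ) • T t x) (Icc ε b) := by
      refine ContinuousOn.smul ?_ ((hc x).mono fun t ht => lt_of_lt_of_le hε ht.1)
      exact continuousOn_id.rpow_const fun t ht => Or.inl (lt_of_lt_of_le hε ht.1).ne'
    obtain ⟨C, hC⟩ := isCompact_Icc.exists_bound_of_continuousOn hcont
    refine ⟨max (‖c • x‖ + 1) C, fun ⟨t, ht0, htb⟩ => ?_⟩
    rcases lt_or_ge t ε with h | h
    · exact le_max_of_le_left (le_of_lt (hε' ⟨ht0, h⟩))
    · exact le_max_of_le_right (hC t ⟨h, htb⟩)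
  obtain ⟨C, hC⟩ := banach_steinhaus hpt
  refine ⟨max C 0, le_max_right _ _, fun t h0 h1 x => ?_⟩
  have h2 : ‖t ^ (1 - γ) • T t x‖ ≤ max C 0 * ‖x‖ :=
    ((t ^ (1 - γ) • T t).le_opNorm x).trans (mul_le_mul_of_nonneg_right
      ((hC ⟨t, h0, h1⟩).trans (le_max_left _ _)) (norm_nonneg _))
  have hp : t ^ (γ - 1) * t ^ (1 - γ) = 1 := by
    rw [← Real.rpow_add h0]; simp
  have hpos : 0 ≤ t ^ (γ - 1) := Real.rpow_nonneg h0.le _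
  rw [norm_smul, Real.norm_of_nonneg (Real.rpow_nonneg h0.le _)] at h2
  calc ‖T t x‖ = t ^ (γ - 1) * (t ^ (1 - γ) * ‖T t x‖) := by rw [← mul_assoc, hp, one_mul]
    _ ≤ t ^ (γ - 1) * (max C 0 * ‖x‖) := by gcongr
    _ = _ := by ring

namespace RLFam

variable {γ : ℝ} {T : ℝ → X →L[ℝ] X}

lemma adm (hT : RLFam γ T) (x : X) : RLAdm γ (fun t => T t x) where
  cont := hT.cont x
  bound b := by
    obtain ⟨M, _, hM⟩ := hT.bound b
    refine ⟨M * ‖x‖, fun t h0 h1 => (hM t h0 h1 x).trans (le_of_eq (by ring))⟩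

/-- Strong continuity and local boundedness make `(t, y) ↦ T t y` jointly continuous. -/
lemma cont_comp (hT : RLFam γ T) {Z : Type*} [TopologicalSpace Z] {S : Set Z} {u : Z → ℝ}
    {z : Z → X} (hu : ContinuousOn u S) (hpos : ∀ p ∈ S, 0 < u p) (hz : ContinuousOn z S) :
    ContinuousOn (fun p => T (u p) (z p)) S := by
  intro p hp
  have hup : 0 < u p := hpos p hp
  obtain ⟨M, hM0, hM⟩ := hT.bound (u p + 1)
  have h1 : Tendsto (fun q => T (u q) (z p)) (𝓝[S] p) (𝓝 (T (u p) (z p))) :=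
    (((hT.cont (z p)).continuousAt (Ioi_mem_nhds hup)).tendsto).comp (hu p hp)
  have h2 : Tendsto (fun q => T (u q) (z q - z p)) (𝓝[S] p) (𝓝 0) := by
    have h3 : Tendsto (fun q => M * (u q) ^ (γ - 1) * ‖z q - z p‖) (𝓝[S] p)
        (𝓝 (M * (u p) ^ (γ - 1) * ‖z p - z p‖)) := by
      refine Tendsto.mul (tendsto_const_nhds.mul ?_) ((hz p hp).sub tendsto_const_nhds).norm
      exact (Real.continuousAt_rpow_const _ _ (Or.inl hup.ne')).tendsto.comp (hu p hp)
    rw [sub_self, norm_zero, mul_zero] at h3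
    refine squeeze_zero_norm' ?_ h3
    filter_upwards [self_mem_nhdsWithin, (hu p hp).eventually (gt_mem_nhds (lt_add_one (u p)))]
      with q hq hlt
    exact hM _ (hpos q hq) hlt.le _
  have h4 := h2.add h1
  rw [zero_add] at h4
  refine h4.congr fun q => ?_
  rw [map_sub, sub_add_cancel]

/-- The Riemann-Liouville integrals of the orbits form bounded operators. Their values for `β ≤ 0`
or `t ≤ 0` are irrelevant. -/
lemma exists_op (hT : RLFam γ T) (hγ : 0 < γ) :
    ∃ P : ℝ → ℝ → X →L[ℝ] X, ∀ β t, 0 < β → 0 < t → ∀ x, P β t x = RLint β t (fun σ => T σ x) := by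
  have key : ∀ β t : ℝ, ∃ B : X →L[ℝ] X, 0 < β → 0 < t →
      ∀ x, B x = RLint β t (fun σ => T σ x) := by
    intro β t
    by_cases h : 0 < β ∧ 0 < t
    · obtain ⟨hβ, ht⟩ := h
      obtain ⟨M, hM0, hM⟩ := hT.bound t
      have hG := Real.Gamma_pos_of_pos hβ
      let L : X →ₗ[ℝ] X :=
        { toFun := fun x => RLint β t (fun σ => T σ x)
          map_add' := fun x y => by
            simp only [map_add]
            exact RLint_add (hT.adm x) (hT.adm y) hγ hβ ht
          map_smul' := fun c x => by
            simp only [RLint, map_smul, RingHom.id_apply]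
            simp only [smul_comm _ c, intervalIntegral.integral_smul] }
      refine ⟨L.mkContinuous ((Real.Gamma β)⁻¹ *
        ∫ σ in (0:ℝ)..t, M * ((t - σ) ^ (β - 1) * σ ^ (γ - 1))) fun x => ?_, fun _ _ x => rfl⟩
      change ‖RLint β t (fun σ => T σ x)‖ ≤ _
      rw [RLint, norm_smul, Real.norm_of_nonneg (by positivity), mul_assoc]
      gcongr
      rw [← intervalIntegral.integral_mul_const]
      refine intervalIntegral.norm_integral_le_of_norm_le ht.le ?_
        (((beta_integrable hβ hγ ht).const_mul M).mul_const _)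
      refine Eventually.of_forall fun σ hσ => ?_
      have hσ1 : 0 ≤ (t - σ) ^ (β - 1) := Real.rpow_nonneg (by linarith [hσ.2]) _
      rw [norm_smul, Real.norm_of_nonneg hσ1]
      calc _ ≤ (t - σ) ^ (β - 1) * (M * σ ^ (γ - 1) * ‖x‖) := by
            gcongr; exact hM σ hσ.1 hσ.2 x
        _ = _ := by ring
    · exact ⟨0, fun h1 h2 => absurd ⟨h1, h2⟩ h⟩
  choose P hP using key
  exact ⟨P, hP⟩

end RLFam

/-- `P β t` is the operator `x ↦ J^β (T · x) (t)`, for `β, t > 0`. -/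
def IsRLOp (T : ℝ → X →L[ℝ] X) (P : ℝ → ℝ → X →L[ℝ] X) : Prop :=
  ∀ β t, 0 < β → 0 < t → ∀ x, P β t x = RLint β t (fun σ => T σ x)

section ops

variable [CompleteSpace X] {γ : ℝ} {T : ℝ → X →L[ℝ] X} {P : ℝ → ℝ → X →L[ℝ] X}

lemma IsRLOp.adm (hP : IsRLOp T P) (hT : RLFam γ T) (hγ : 0 < γ) {β : ℝ} (hβ : 0 < β) (x : X) :
    RLAdm γ (fun t => P β t x) :=
  ((hT.adm x).rl hγ hβ).congr fun t ht => (hP β t hβ ht x).symm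

/-- The semigroup property of `J`, read on the operators `P β t`. -/
lemma IsRLOp.rl (hP : IsRLOp T P) (hT : RLFam γ T) (hγ : 0 < γ) {β β' t : ℝ} (hβ : 0 < β)
    (hβ' : 0 < β') (ht : 0 < t) (x : X) :
    RLint β t (fun r => P β' r x) = P (β + β') t x := by
  rw [hP _ _ (by linarith) ht, ← RLint_RLint (hT.adm x) hγ hβ hβ' ht]
  exact RLint_congr ht fun r hr => hP _ _ hβ' hr x

/-! ### The resolvent equation -/

/-- The equation to which both functional equations reduce: the cosine equation after integration
in `t` minus integration in `s`, and the resolvent equation after applying `J^(2-α)` in both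
variables. -/
def EqE (α : ℝ) (P : ℝ → ℝ → X →L[ℝ] X) : Prop :=
  ∀ x t s, 0 < t → 0 < s →
    P 2 t (P (2 - α) s x) - P (2 - α) t (P 2 s x) = P 2 t x - P 2 s x

/-- The resolvent equation with the operators at time `t` on the left of those at time `s`; it
agrees with the resolvent equation once the family is known to commute. -/
def EqR (α : ℝ) (T : ℝ → X →L[ℝ] X) (P : ℝ → ℝ → X →L[ℝ] X) : Prop :=
  ∀ x t s, 0 < t → 0 < s →
    P α t (T s x) - T t (P α s x) =
      (s ^ (α - 1 - 1) / Real.Gamma (α - 1)) • P α t x -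
      (t ^ (α - 1 - 1) / Real.Gamma (α - 1)) • P α s x

/-- `J^(2 - α)` maps the singular function `g_(α - 1)` to the constant `1`. -/
lemma rl_const_smul {α t : ℝ} (h1 : 1 < α) (h2 : α < 2) (ht : 0 < t) (x : X) :
    RLint (2 - α) t (fun σ => (σ ^ (α - 1 - 1) / Real.Gamma (α - 1)) • x) = x := by
  rw [RLint_rpow (by linarith) (by linarith) ht]
  norm_num

/-- `EqE` is the image of `EqR` under `J^(2 - α)` in `s` and in `t`, and this transformation is
injective. -/
lemma eqR_iff_eqE {α : ℝ} (h1 : 1 < α) (h2 : α < 2) (hT : RLFam (α - 1) T) (hP : IsRLOp T P) :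
    EqR α T P ↔ EqE α P := by
  have hγ : 0 < α - 1 := by linarith
  have hα : 0 < α := by linarith
  have hδ : 0 < 2 - α := by linarith
  -- `J^(2-α)` in `s`, applied to the defect already transformed in `t`.
  have adA : ∀ x t, RLAdm (α - 1) (fun s => P 2 t (T s x) - P (2 - α) t (P α s x)) := fun x t =>
    ((hT.adm x).clm _).sub ((hP.adm hT hγ hα x).clm _)
  have adA' : ∀ x t, RLAdm (α - 1)
      (fun s => (s ^ (α - 1 - 1) / Real.Gamma (α - 1)) • P 2 t x - P α s x) := fun x t =>
    (RLAdm.rpow_smul _ _ _).sub (hP.adm hT hγ hα x)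
  have hA : ∀ x t s, 0 < t → 0 < s →
      RLint (2 - α) s (fun s => (P 2 t (T s x) - P (2 - α) t (P α s x)) -
        ((s ^ (α - 1 - 1) / Real.Gamma (α - 1)) • P 2 t x - P α s x)) =
      (P 2 t (P (2 - α) s x) - P (2 - α) t (P 2 s x)) - (P 2 t x - P 2 s x) := by
    intro x t s ht hs
    rw [RLint_sub (adA x t) (adA' x t) hγ hδ hs,
      RLint_sub ((hT.adm x).clm _) ((hP.adm hT hγ hα x).clm _) hγ hδ hs,
      RLint_sub (RLAdm.rpow_smul _ _ _) (hP.adm hT hγ hα x) hγ hδ hs,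
      rl_const_smul h1 h2 hs, hP.rl hT hγ hδ hα hs, RLint_clm (hT.adm x) hγ hδ hs,
      RLint_clm (hP.adm hT hγ hα x) hγ hδ hs, hP.rl hT hγ hδ hα hs, ← hP _ _ hδ hs,
      show 2 - α + α = 2 by ring]
  -- `J^(2-α)` in `t`, applied to the defect of the resolvent equation.
  have adB : ∀ x s, RLAdm (α - 1) (fun t => P α t (T s x) - T t (P α s x)) := fun x s =>
    (hP.adm hT hγ hα _).sub (hT.adm _)
  have adB' : ∀ x s, RLAdm (α - 1)
      (fun t => (s ^ (α - 1 - 1) / Real.Gamma (α - 1)) • P α t x -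
        (t ^ (α - 1 - 1) / Real.Gamma (α - 1)) • P α s x) := fun x s =>
    ((hP.adm hT hγ hα x).clm
      ((s ^ (α - 1 - 1) / Real.Gamma (α - 1)) • ContinuousLinearMap.id ℝ X)).sub
      (RLAdm.rpow_smul _ _ _)
  have hB : ∀ x t s, 0 < t → 0 < s →
      RLint (2 - α) t (fun t => (P α t (T s x) - T t (P α s x)) -
        ((s ^ (α - 1 - 1) / Real.Gamma (α - 1)) • P α t x -
        (t ^ (α - 1 - 1) / Real.Gamma (α - 1)) • P α s x)) =
      (P 2 t (T s x) - P (2 - α) t (P α s x)) -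
        ((s ^ (α - 1 - 1) / Real.Gamma (α - 1)) • P 2 t x - P α s x) := by
    intro x t s ht hs
    have e := RLint_clm (hP.adm hT hγ hα x) hγ hδ ht
      ((s ^ (α - 1 - 1) / Real.Gamma (α - 1)) • ContinuousLinearMap.id ℝ X)
    simp only [smul_apply, ContinuousLinearMap.id_apply] at e
    have adc : RLAdm (α - 1) (fun t => (s ^ (α - 1 - 1) / Real.Gamma (α - 1)) • P α t x) :=
      (hP.adm hT hγ hα x).clm
        ((s ^ (α - 1 - 1) / Real.Gamma (α - 1)) • ContinuousLinearMap.id ℝ X)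
    rw [RLint_sub (adB x s) (adB' x s) hγ hδ ht,
      RLint_sub (hP.adm hT hγ hα _) (hT.adm _) hγ hδ ht,
      RLint_sub adc (RLAdm.rpow_smul _ _ _) hγ hδ ht, rl_const_smul h1 h2 ht, e,
      hP.rl hT hγ hδ hα ht, hP.rl hT hγ hδ hα ht, ← hP _ _ hδ ht, show 2 - α + α = 2 by ring]
  constructor
  · intro h x t s ht hs
    rw [← sub_eq_zero, ← hA x t s ht hs,
      RLint_congr (g := fun _ => 0) hs fun r hr => ?_, RLint_zero]
    rw [← hB x t r ht hr, RLint_congr (g := fun _ => 0) ht fun q hq => ?_, RLint_zero]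
    rw [sub_eq_zero]
    exact h x q r hq hr
  · intro h x t s ht hs
    rw [← sub_eq_zero]
    refine RLint_inj ((adB x s).sub (adB' x s)) hγ hδ (by linarith) (fun q hq => ?_) ht
    rw [hB x q s hq hs]
    refine RLint_inj ((adA x q).sub (adA' x q)) hγ hδ (by linarith) (fun r hr => ?_) hs
    rw [hA x q r hq hr, sub_eq_zero]
    exact h x q r hq hr

/-- The ordered resolvent equation already forces the family to commute. With `a = J^α T` and
`p = T - g_{α-1}` the equation reads `a(t) p(s) = p(t) a(s)`. For fixed `s`, put
`v(t) = [a(t), a(s)] x` and `w(t) = p(t) a(s) x - p(s) a(t) x`. Then `v = J^α w` and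
`p(r) v(q) = a(r) w(q)`, so `p * v = a * w = T * J^α w = T * v`, that is `g_{α-1} * v = 0`,
and `v = 0`. -/
lemma eqR_commute {α : ℝ} (h1 : 1 < α) (h2 : α < 2) (hT : RLFam (α - 1) T) (hP : IsRLOp T P)
    (hR : EqR α T P) (x : X) {t s : ℝ} (ht : 0 < t) (hs : 0 < s) : T s (T t x) = T t (T s x) := by
  have hγ : 0 < α - 1 := by linarith
  have hα : 0 < α := by linarith
  set g : ℝ → ℝ := fun t => t ^ (α - 1 - 1) / Real.Gamma (α - 1) with hg
  have hR' : ∀ x t s, 0 < t → 0 < s →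
      P α t (T s x) - g s • P α t x = T t (P α s x) - g t • P α s x := by
    intro x t s ht hs
    have := hR x t s ht hs
    rw [sub_eq_sub_iff_add_eq_add] at this ⊢
    rw [this]; simp only [hg]; abel
  have hcomm : ∀ x t s, 0 < t → 0 < s → P α t (P α s x) - P α s (P α t x) = 0 := by
    intro x t s ht hs
    set v : ℝ → X := fun t => P α t (P α s x) - P α s (P α t x) with hv
    set w : ℝ → X := fun t => (T t (P α s x) - g t • P α s x) - (T s (P α t x) - g s • P α t x)
      with hw
    have adv : RLAdm (α - 1) v := (hP.adm hT hγ hα _).sub ((hP.adm hT hγ hα _).clm _)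
    have ad1 : RLAdm (α - 1) (fun t => T t (P α s x) - g t • P α s x) :=
      (hT.adm _).sub (RLAdm.rpow_smul _ _ _)
    have ad2 : RLAdm (α - 1) (fun t => T s (P α t x) - g s • P α t x) :=
      (hP.adm hT hγ hα x).clm (T s - g s • ContinuousLinearMap.id ℝ X)
    have adw : RLAdm (α - 1) w := ad1.sub ad2
    have hvw : ∀ t, 0 < t → v t = RLint α t w := by
      intro t ht
      have adg : ∀ y : X, RLAdm (α - 1) (fun t => g t • y) := fun y => RLAdm.rpow_smul _ _ _
      have e2 : RLint α t (fun t => T s (P α t x) - g s • P α t x) =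
          P α s (P α t x) - P α s (RLint α t (fun t => g t • x)) := by
        rw [RLint_congr (g := fun r => P α s (T r x - g r • x)) ht fun r hr => ?_,
          RLint_clm ((hT.adm x).sub (adg x)) hγ hα ht,
          RLint_sub (hT.adm x) (adg x) hγ hα ht, map_sub, ← hP _ _ hα ht]
        rw [← hR' x s r hs hr, map_sub, map_smul]
      have e3 : RLint α t (fun t => g t • P α s x) = P α s (RLint α t (fun t => g t • x)) := by
        rw [← RLint_clm (adg x) hγ hα ht]
        simp only [map_smul]
      rw [hw, RLint_sub ad1 ad2 hγ hα ht, RLint_sub (hT.adm _) (adg _) hγ hα ht, e2, e3,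
        ← hP _ _ hα ht, hv]
      abel_nf
    have hpv : ∀ r q, 0 < r → 0 < q → T r (v q) - g r • v q = P α r (w q) := by
      intro r q hr hq
      have k1 := hR' (P α s x) r q hr hq
      have k2 := hR' (P α q x) r s hr hs
      simp only [hv, hw, map_sub, map_smul, smul_sub]
      rw [k1, k2]
      abel
    -- Associativity of convolution, `(J^α T) * w = T * (J^α w)`, by Fubini on a triangle.
    have hassoc : ∀ t, 0 < t → ∫ r in (0:ℝ)..t, P α r (w (t - r)) =
        ∫ σ in (0:ℝ)..t, T σ (v (t - σ)) := by
      intro t ht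
      obtain ⟨M, hM0, hM⟩ := hT.bound t
      obtain ⟨N, hN⟩ := adw.bound t
      have hsw := tri_swap (C := M * |N|) hγ hα hγ ht
        (fun r σ => (r - σ) ^ (α - 1) • T σ (w (t - r))) ?_ ?_
      · have l1 : ∫ r in (0:ℝ)..t, P α r (w (t - r)) = (Real.Gamma α)⁻¹ •
            ∫ r in (0:ℝ)..t, ∫ σ in (0:ℝ)..r, (r - σ) ^ (α - 1) • T σ (w (t - r)) := by
          rw [← intervalIntegral.integral_smul]
          refine intervalIntegral.integral_congr_Ioo_of_le ht.le fun r hr => ?_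
          exact hP _ _ hα hr.1 _
        rw [l1, hsw, ← intervalIntegral.integral_smul]
        refine intervalIntegral.integral_congr_Ioo_of_le ht.le fun σ hσ => ?_
        have hσt : 0 < t - σ := sub_pos.2 hσ.2
        rw [hvw _ hσt, ← RLint_clm adw hγ hα hσt, RLint]
        congr 1
        have := intervalIntegral.integral_comp_sub_left (a := 0) (b := t - σ)
          (fun r => (r - σ) ^ (α - 1) • T σ (w (t - r))) t
        rw [sub_sub_cancel, sub_zero] at this
        rw [← this]
        refine intervalIntegral.integral_congr fun r _ => ?_
        simp only [sub_sub_cancel]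
        rw [sub_right_comm]
      · refine ContinuousOn.smul ?_ (hT.cont_comp continuousOn_snd (fun p hp => hp.1) ?_)
        · exact ContinuousOn.rpow_const (by fun_prop) fun p hp => Or.inl (by linarith [hp.2.1])
        · exact adw.cont.comp (by fun_prop) fun p hp => sub_pos.2 hp.2.2
      · intro r σ k0 k1 k2
        have n2 : 0 ≤ (r - σ) ^ (α - 1) := Real.rpow_nonneg (by linarith) _
        have n3 : 0 ≤ σ ^ (α - 1 - 1) := Real.rpow_nonneg (by linarith) _
        have n4 : 0 ≤ (t - r) ^ (α - 1 - 1) := Real.rpow_nonneg (by linarith) _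
        rw [norm_smul, Real.norm_of_nonneg n2]
        have b1 : ‖w (t - r)‖ ≤ |N| * (t - r) ^ (α - 1 - 1) :=
          (hN (t - r) (by linarith) (by linarith)).trans (by gcongr; exact le_abs_self N)
        calc _ ≤ (r - σ) ^ (α - 1) * (M * σ ^ (α - 1 - 1) * (|N| * (t - r) ^ (α - 1 - 1))) := by
              gcongr
              refine (hM σ k0 (by linarith) _).trans ?_
              gcongr
          _ = _ := by ring
    refine RLint_inj adv hγ hγ (by linarith) (fun t ht => ?_) ht
    have hint : ∀ (Q : ℝ → X →L[ℝ] X), RLFam (α - 1) Q →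
        IntervalIntegrable (fun r => Q r (v (t - r))) volume 0 t := by
      intro Q hQ
      obtain ⟨M, hM0, hM⟩ := hQ.bound t
      obtain ⟨N, hN⟩ := adv.bound t
      refine integrable_of_bound ht ?_ ((beta_integrable hγ hγ ht).const_mul (M * |N|)) ?_
      · exact hQ.cont_comp continuousOn_id (fun p hp => hp.1)
          (adv.cont.comp (by fun_prop) fun p hp => sub_pos.2 hp.2)
      · intro σ k0 k1
        have n3 : 0 ≤ σ ^ (α - 1 - 1) := Real.rpow_nonneg (by linarith) _
        have n4 : 0 ≤ (t - σ) ^ (α - 1 - 1) := Real.rpow_nonneg (by linarith) _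
        have b1 : ‖v (t - σ)‖ ≤ |N| * (t - σ) ^ (α - 1 - 1) :=
          (hN (t - σ) (by linarith) (by linarith)).trans (by gcongr; exact le_abs_self N)
        calc _ ≤ M * σ ^ (α - 1 - 1) * (|N| * (t - σ) ^ (α - 1 - 1)) := by
              refine (hM σ k0 k1.le _).trans ?_
              gcongr
          _ = _ := by ring
    have hgfam : RLFam (α - 1) (fun t => g t • ContinuousLinearMap.id ℝ X) := by
      refine ⟨fun y => (RLAdm.rpow_smul (α - 1) _ y).cont, fun b => ?_⟩
      have hG := Real.Gamma_pos_of_pos hγ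
      refine ⟨(Real.Gamma (α - 1))⁻¹, by positivity, fun t k0 k1 y => ?_⟩
      have n3 : 0 ≤ t ^ (α - 1 - 1) := Real.rpow_nonneg (by linarith) _
      simp only [smul_apply, ContinuousLinearMap.id_apply, hg]
      rw [norm_smul, Real.norm_of_nonneg (by positivity)]
      apply le_of_eq
      ring
    have hgint := hint _ hgfam
    simp only [smul_apply, ContinuousLinearMap.id_apply] at hgint
    have hz : ∫ r in (0:ℝ)..t, g r • v (t - r) = 0 := by
      have e1 := hassoc t ht
      have e2 : ∫ r in (0:ℝ)..t, P α r (w (t - r)) =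
          ∫ r in (0:ℝ)..t, (T r (v (t - r)) - g r • v (t - r)) :=
        intervalIntegral.integral_congr_Ioo_of_le ht.le fun r hr =>
          (hpv r (t - r) hr.1 (sub_pos.2 hr.2)).symm
      rw [e2, intervalIntegral.integral_sub (hint T hT) hgint] at e1
      simpa using e1
    have e := intervalIntegral.integral_comp_sub_left (a := 0) (b := t)
      (fun r => g r • v (t - r)) t
    rw [sub_self, sub_zero, hz] at e
    simp only [sub_sub_cancel, hg] at e
    simp only [div_eq_inv_mul, mul_smul] at e
    rw [intervalIntegral.integral_smul] at e
    rw [RLint]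
    exact e
  -- `[a(t), a(s)] = J_t^α J_s^α [T(t), T(s)]`, and `J^α` is injective.
  have hc2 : ∀ x t s, 0 < t → 0 < s → P α t (T s x) - T s (P α t x) = 0 := by
    intro x t s ht hs
    refine RLint_inj (f := fun s => P α t (T s x) - T s (P α t x))
      (((hT.adm x).clm _).sub (hT.adm _)) hγ hα h2 (fun r hr => ?_) hs
    rw [RLint_sub ((hT.adm x).clm _) (hT.adm _) hγ hα hr, RLint_clm (hT.adm x) hγ hα hr,
      ← hP _ _ hα hr, ← hP _ _ hα hr]
    exact hcomm x t r ht hr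
  rw [← sub_eq_zero]
  refine RLint_inj (f := fun t => T s (T t x) - T t (T s x))
      (((hT.adm x).clm _).sub (hT.adm _)) hγ hα h2 (fun r hr => ?_) ht
  rw [RLint_sub ((hT.adm x).clm _) (hT.adm _) hγ hα hr, RLint_clm (hT.adm x) hγ hα hr,
      ← hP _ _ hα hr, ← hP _ _ hα hr, ← neg_eq_zero, neg_sub]
  exact hc2 x r s hr hs

/-- The definition of a resolvent is the ordered equation `EqR`, where commutation need not be
assumed because of `eqR_commute`. -/
lemma resolvent_iff_eqR {α : ℝ} (h1 : 1 < α) (h2 : α < 2) (hT : RLFam (α - 1) T)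
    (hP : IsRLOp T P) :
    ((∀ t > (0:ℝ), ∀ s > (0:ℝ), ∀ x : X, T s (T t x) = T t (T s x)) ∧
      (∀ x : X, ∀ t > (0:ℝ), ∀ s > (0:ℝ),
        T s (RLint α t (fun σ => T σ x)) - RLint α s (fun σ => T σ (T t x)) =
          (s ^ (α - 2) / Real.Gamma (α - 1)) • RLint α t (fun σ => T σ x) -
          (t ^ (α - 2) / Real.Gamma (α - 1)) • RLint α s (fun σ => T σ x))) ↔ EqR α T P := by
  have hγ : 0 < α - 1 := by linarith
  have hα : 0 < α := by linarith
  have hcommP : (∀ t > (0:ℝ), ∀ s > (0:ℝ), ∀ x : X, T s (T t x) = T t (T s x)) →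
      ∀ t > (0:ℝ), ∀ s > (0:ℝ), ∀ x : X, T s (P α t x) = P α t (T s x) := by
    intro h t ht s hs x
    rw [hP _ _ hα ht, hP _ _ hα ht, ← RLint_clm (hT.adm x) hγ hα ht]
    exact RLint_congr ht fun r hr => h r hr s hs x
  have e2 : α - 2 = α - 1 - 1 := by ring
  constructor
  · rintro ⟨hc, hR⟩ x t s ht hs
    have := hR x t ht s hs
    rwa [← hP _ _ hα ht, ← hP _ _ hα hs, ← hP _ _ hα hs, hcommP hc t ht s hs,
      ← hcommP hc s hs t ht, e2] at this
  · intro hR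
    have hc : ∀ t > (0:ℝ), ∀ s > (0:ℝ), ∀ x : X, T s (T t x) = T t (T s x) :=
      fun t ht s hs x => eqR_commute h1 h2 hT hP hR x ht hs
    refine ⟨hc, fun x t ht s hs => ?_⟩
    rw [← hP _ _ hα ht, ← hP _ _ hα hs, ← hP _ _ hα hs, hcommP hc t ht s hs,
      ← hcommP hc s hs t ht, e2]
    exact hR x t s ht hs

end ops

/-! ### Integrals over rectangles and two-variable convolutions -/

/-- Lebesgue measure on the open rectangle `(0, a) × (0, b)`, as a product. -/
noncomputable abbrev rectMeas (a b : ℝ) : Measure (ℝ × ℝ) :=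
  (volume.restrict (Ioo 0 a)).prod (volume.restrict (Ioo 0 b))

lemma ae_rect {a b : ℝ} {p : ℝ × ℝ → Prop} (h : ∀ x y, 0 < x → x < a → 0 < y → y < b → p (x, y)) :
    ∀ᵐ q ∂(rectMeas a b), p q := by
  rw [rectMeas, Measure.prod_restrict]
  refine (ae_restrict_iff' (measurableSet_Ioo.prod measurableSet_Ioo)).2
    (Eventually.of_forall fun q hq => h q.1 q.2 hq.1.1 hq.1.2 hq.2.1 hq.2.2)

lemma rect_meas {a b : ℝ} {Φ : ℝ → ℝ → X}
    (hc : ContinuousOn (fun p : ℝ × ℝ => Φ p.1 p.2) (Ioo 0 a ×ˢ Ioo 0 b)) :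
    AEStronglyMeasurable (fun p : ℝ × ℝ => Φ p.1 p.2) (rectMeas a b) := by
  rw [rectMeas, Measure.prod_restrict]
  exact hc.aestronglyMeasurable (measurableSet_Ioo.prod measurableSet_Ioo)

lemma rect_integrable {a b : ℝ} (ha : 0 < a) (hb : 0 < b) {Φ : ℝ → ℝ → X} {g h : ℝ → ℝ}
    (hc : ContinuousOn (fun p : ℝ × ℝ => Φ p.1 p.2) (Ioo 0 a ×ˢ Ioo 0 b))
    (hg : IntervalIntegrable g volume 0 a) (hh : IntervalIntegrable h volume 0 b)
    (hb' : ∀ x y, 0 < x → x < a → 0 < y → y < b → ‖Φ x y‖ ≤ g x * h y) :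
    Integrable (fun p : ℝ × ℝ => Φ p.1 p.2) (rectMeas a b) := by
  rw [intervalIntegrable_iff_integrableOn_Ioo_of_le ha.le] at hg
  rw [intervalIntegrable_iff_integrableOn_Ioo_of_le hb.le] at hh
  exact (hg.mul_prod hh).mono' (rect_meas hc) (ae_rect hb')

lemma iter_eq {a b : ℝ} (ha : 0 < a) (hb : 0 < b) (Φ : ℝ → ℝ → X) :
    ∫ x in (0:ℝ)..a, ∫ y in (0:ℝ)..b, Φ x y = ∫ x in Ioo 0 a, ∫ y in Ioo 0 b, Φ x y := by
  simp only [intervalIntegral.integral_of_le ha.le, intervalIntegral.integral_of_le hb.le,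
    integral_Ioc_eq_integral_Ioo]

lemma rect_integral {a b : ℝ} (ha : 0 < a) (hb : 0 < b) {Φ : ℝ → ℝ → X}
    (hi : Integrable (fun p : ℝ × ℝ => Φ p.1 p.2) (rectMeas a b)) :
    ∫ x in (0:ℝ)..a, ∫ y in (0:ℝ)..b, Φ x y = ∫ p, Φ p.1 p.2 ∂(rectMeas a b) := by
  rw [iter_eq ha hb, integral_prod _ hi]

lemma rect_swap {a b : ℝ} (ha : 0 < a) (hb : 0 < b) {Φ : ℝ → ℝ → X}
    (hi : Integrable (fun p : ℝ × ℝ => Φ p.1 p.2) (rectMeas a b)) :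
    ∫ x in (0:ℝ)..a, ∫ y in (0:ℝ)..b, Φ x y = ∫ y in (0:ℝ)..b, ∫ x in (0:ℝ)..a, Φ x y := by
  rw [iter_eq ha hb, iter_eq hb ha]
  exact integral_integral_swap hi

/-- The two-variable analogue of `RLAdm`: continuity on the open quadrant and a bound
`O(x ^ (γ - 1) * y ^ (γ - 1))` on bounded squares. It is used both for kernels and for orbits. -/
structure RLAdm2 (γ : ℝ) (F : ℝ → ℝ → X) : Prop where
  cont : ContinuousOn (fun p : ℝ × ℝ => F p.1 p.2) (Ioi 0 ×ˢ Ioi 0)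
  bound : ∀ b : ℝ, ∃ M : ℝ, 0 ≤ M ∧ ∀ x y, 0 < x → x ≤ b → 0 < y → y ≤ b →
    ‖F x y‖ ≤ M * (x ^ (γ - 1) * y ^ (γ - 1))

namespace RLAdm2
variable {γ : ℝ} {F G : ℝ → ℝ → X}

lemma add (hF : RLAdm2 γ F) (hG : RLAdm2 γ G) : RLAdm2 γ (fun x y => F x y + G x y) where
  cont := hF.cont.add hG.cont
  bound b := by
    obtain ⟨M, h0, hM⟩ := hF.bound b
    obtain ⟨M', h0', hM'⟩ := hG.bound b
    refine ⟨M + M', by positivity, fun x y k1 k2 k3 k4 => (norm_add_le _ _).trans ?_⟩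
    rw [add_mul]
    exact add_le_add (hM x y k1 k2 k3 k4) (hM' x y k1 k2 k3 k4)

lemma neg (hF : RLAdm2 γ F) : RLAdm2 γ (fun x y => - F x y) where
  cont := hF.cont.neg
  bound b := by simpa using hF.bound b

lemma sub (hF : RLAdm2 γ F) (hG : RLAdm2 γ G) : RLAdm2 γ (fun x y => F x y - G x y) := by
  simpa [sub_eq_add_neg] using hF.add hG.neg

lemma flip (hF : RLAdm2 γ F) : RLAdm2 γ (fun x y => F y x) where
  cont := by
    have := hF.cont.comp (f := Prod.swap) (s := Ioi 0 ×ˢ Ioi 0) (by fun_prop)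
      fun p hp => ⟨hp.2, hp.1⟩
    exact this
  bound b := by
    obtain ⟨M, h0, hM⟩ := hF.bound b
    refine ⟨M, h0, fun x y k1 k2 k3 k4 => ?_⟩
    rw [mul_comm (x ^ _)]
    exact hM y x k3 k4 k1 k2

lemma congr (hF : RLAdm2 γ F) (h : ∀ x y, 0 < x → 0 < y → F x y = G x y) : RLAdm2 γ G where
  cont := hF.cont.congr fun p hp => (h p.1 p.2 hp.1 hp.2).symm
  bound b := by
    obtain ⟨M, h0, hM⟩ := hF.bound b
    exact ⟨M, h0, fun x y k1 k2 k3 k4 => by rw [← h x y k1 k3]; exact hM x y k1 k2 k3 k4⟩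

end RLAdm2

lemma rpow_le_of_le {p q x b : ℝ} (hpq : q ≤ p) (hx : 0 < x) (hxb : x ≤ b) :
    x ^ p ≤ b ^ (p - q) * x ^ q := by
  calc x ^ p = x ^ (p - q) * x ^ q := by rw [← Real.rpow_add hx]; simp
    _ ≤ _ := by gcongr

lemma RLAdm2.rpow_mul_rpow {δ p q : ℝ} (hp : δ - 1 ≤ p) (hq : δ - 1 ≤ q) :
    RLAdm2 δ (fun x y : ℝ => x ^ p * y ^ q) where
  cont := (continuousOn_fst.rpow_const fun z hz => Or.inl (ne_of_gt hz.1)).mul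
    (continuousOn_snd.rpow_const fun z hz => Or.inl (ne_of_gt hz.2))
  bound b := by
    refine ⟨|b| ^ (p - (δ - 1)) * |b| ^ (q - (δ - 1)), by positivity, fun x y k1 k2 k3 k4 => ?_⟩
    rw [Real.norm_of_nonneg (by positivity)]
    calc _ ≤ (|b| ^ (p - (δ - 1)) * x ^ (δ - 1)) * (|b| ^ (q - (δ - 1)) * y ^ (δ - 1)) := by
          gcongr
          · exact rpow_le_of_le hp k1 (k2.trans (le_abs_self b))
          · exact rpow_le_of_le hq k3 (k4.trans (le_abs_self b))
      _ = _ := by ring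

/-- The case `p = δ - 1` rests on `(x + y) ^ (δ - 1) ≤ x ^ (δ - 1)`; larger exponents only cost a
constant depending on the bound `b`. -/
lemma RLAdm2.add_rpow {δ p : ℝ} (hδ : δ ≤ 1) (hp : δ - 1 ≤ p) :
    RLAdm2 δ (fun x y : ℝ => (x + y) ^ p) where
  cont := (by fun_prop : ContinuousOn (fun z : ℝ × ℝ => z.1 + z.2) _).rpow_const
    fun z hz => Or.inl (ne_of_gt (add_pos hz.1 hz.2))
  bound b := by
    refine ⟨(|b| + |b|) ^ (p - (δ - 1)) * |b| ^ (0 - (δ - 1)), by positivity,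
      fun x y k1 k2 k3 k4 => ?_⟩
    have hb := le_abs_self b
    rw [Real.norm_of_nonneg (by positivity)]
    calc (x + y) ^ p ≤ (|b| + |b|) ^ (p - (δ - 1)) * (x + y) ^ (δ - 1) :=
          rpow_le_of_le hp (by linarith) (by linarith)
      _ ≤ (|b| + |b|) ^ (p - (δ - 1)) * (x ^ (δ - 1) * (|b| ^ (0 - (δ - 1)) * y ^ (δ - 1))) := by
          gcongr
          calc (x + y) ^ (δ - 1) ≤ x ^ (δ - 1) :=
                Real.rpow_le_rpow_of_nonpos k1 (by linarith) (by linarith)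
            _ = x ^ (δ - 1) * y ^ (0:ℝ) := by simp
            _ ≤ _ := by
                gcongr
                exact rpow_le_of_le (by linarith) k3 (k4.trans hb)
      _ = _ := by ring

/-- The two-variable convolution `∫_0^t ∫_0^s κ(t-σ, s-τ) F(σ, τ) dτ dσ`. -/
noncomputable def conv2 (κ : ℝ → ℝ → ℝ) (F : ℝ → ℝ → X) (t s : ℝ) : X :=
  ∫ σ in (0:ℝ)..t, ∫ τ in (0:ℝ)..s, κ (t - σ) (s - τ) • F σ τ

section conv2
variable {γ δ : ℝ} {κ κ' : ℝ → ℝ → ℝ} {F : ℝ → ℝ → X}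

lemma conv2_contOn (hκ : RLAdm2 δ κ) (hF : RLAdm2 γ F) (t s : ℝ) :
    ContinuousOn (fun p : ℝ × ℝ => κ (t - p.1) (s - p.2) • F p.1 p.2) (Ioo 0 t ×ˢ Ioo 0 s) := by
  refine ContinuousOn.smul ?_ (hF.cont.mono fun p hp => ⟨hp.1.1, hp.2.1⟩)
  exact hκ.cont.comp (f := fun p : ℝ × ℝ => (t - p.1, s - p.2)) (by fun_prop)
    fun p hp => ⟨sub_pos.2 hp.1.2, sub_pos.2 hp.2.2⟩

lemma conv2_bound (hκ : RLAdm2 δ κ) (hF : RLAdm2 γ F) (b : ℝ) :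
    ∃ C, 0 ≤ C ∧ ∀ a c x y, 0 < a → a ≤ b → 0 < c → c ≤ b → 0 < x → x ≤ b → 0 < y → y ≤ b →
      ‖κ a c • F x y‖ ≤ C * ((a ^ (δ - 1) * x ^ (γ - 1)) * (c ^ (δ - 1) * y ^ (γ - 1))) := by
  obtain ⟨K, hK0, hK⟩ := hκ.bound b
  obtain ⟨M, hM0, hM⟩ := hF.bound b
  refine ⟨K * M, by positivity, fun a c x y h1 h2 h3 h4 h5 h6 h7 h8 => ?_⟩
  rw [norm_smul]
  calc _ ≤ (K * (a ^ (δ - 1) * c ^ (δ - 1))) * (M * (x ^ (γ - 1) * y ^ (γ - 1))) := by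
        gcongr
        · exact hK a c h1 h2 h3 h4
        · exact hM x y h5 h6 h7 h8
    _ = _ := by ring

lemma conv2_integrable (hγ : 0 < γ) (hδ : 0 < δ) (hκ : RLAdm2 δ κ) (hF : RLAdm2 γ F) {t s : ℝ}
    (ht : 0 < t) (hs : 0 < s) :
    Integrable (fun p : ℝ × ℝ => κ (t - p.1) (s - p.2) • F p.1 p.2) (rectMeas t s) := by
  obtain ⟨C, hC0, hC⟩ := conv2_bound hκ hF (max t s)
  have l1 := le_max_left t s
  have l2 := le_max_right t s
  refine rect_integrable (Φ := fun σ τ => κ (t - σ) (s - τ) • F σ τ) ht hs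
    (conv2_contOn hκ hF t s) ((beta_integrable hδ hγ ht).const_mul C)
    (beta_integrable hδ hγ hs) fun x y h1 h2 h3 h4 => ?_
  rw [mul_assoc]
  exact hC _ _ _ _ (by linarith) (by linarith) (by linarith) (by linarith) h1 (by linarith)
    h3 (by linarith)

lemma conv2_add (hγ : 0 < γ) (hδ : 0 < δ) (hκ : RLAdm2 δ κ) (hκ' : RLAdm2 δ κ') (hF : RLAdm2 γ F)
    {t s : ℝ} (ht : 0 < t) (hs : 0 < s) :
    conv2 (fun a b => κ a b + κ' a b) F t s = conv2 κ F t s + conv2 κ' F t s := by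
  have i1 := conv2_integrable hγ hδ hκ hF ht hs
  have i2 := conv2_integrable hγ hδ hκ' hF ht hs
  have i3 := conv2_integrable hγ hδ (hκ.add hκ') hF ht hs
  rw [conv2, conv2, conv2, rect_integral (Φ := fun σ τ => κ (t - σ) (s - τ) • F σ τ) ht hs i1,
    rect_integral (Φ := fun σ τ => κ' (t - σ) (s - τ) • F σ τ) ht hs i2,
    rect_integral (Φ := fun σ τ => (κ (t - σ) (s - τ) + κ' (t - σ) (s - τ)) • F σ τ) ht hs i3,
    ← integral_add i1 i2]
  simp only [add_smul]

lemma conv2_sub (hγ : 0 < γ) (hδ : 0 < δ) (hκ : RLAdm2 δ κ) (hκ' : RLAdm2 δ κ') (hF : RLAdm2 γ F)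
    {t s : ℝ} (ht : 0 < t) (hs : 0 < s) :
    conv2 (fun a b => κ a b - κ' a b) F t s = conv2 κ F t s - conv2 κ' F t s := by
  rw [eq_sub_iff_add_eq, ← conv2_add hγ hδ (hκ.sub hκ') hκ' hF ht hs]
  simp only [sub_add_cancel]

lemma conv2_congr {t s : ℝ} (ht : 0 < t) (hs : 0 < s)
    (h : ∀ a b, 0 < a → 0 < b → κ a b = κ' a b) : conv2 κ F t s = conv2 κ' F t s := by
  refine intervalIntegral.integral_congr_Ioo_of_le ht.le fun σ hσ => ?_
  refine intervalIntegral.integral_congr_Ioo_of_le hs.le fun τ hτ => ?_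
  simp only [h _ _ (sub_pos.2 hσ.2) (sub_pos.2 hτ.2)]

lemma conv2_flip (hγ : 0 < γ) (hδ : 0 < δ) (hκ : RLAdm2 δ κ) (hF : RLAdm2 γ F)
    {t s : ℝ} (ht : 0 < t) (hs : 0 < s) :
    conv2 κ F t s = conv2 (fun a b => κ b a) (fun a b => F b a) s t :=
  rect_swap (Φ := fun σ τ => κ (t - σ) (s - τ) • F σ τ) ht hs
    (conv2_integrable hγ hδ hκ hF ht hs)

/-- The scaling `σ = t v`, `τ = s u` moves the convolution to the unit square. As
`γ + δ = 1`, all powers of `t` and `s` cancel in the bound of the integrand. -/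
lemma conv2_scale (hγ : 0 < γ) (hδ : 0 < δ) (hsum : γ + δ = 1) (hκ : RLAdm2 δ κ)
    (hF : RLAdm2 γ F) (b : ℝ) :
    ∃ C, ∀ t s, 0 < t → t ≤ b → 0 < s → s ≤ b →
      (∀ v u, 0 < v → v < 1 → 0 < u → u < 1 →
        ‖(t * s) • κ (t - t * v) (s - s * u) • F (t * v) (s * u)‖ ≤
          C * ((1 - v) ^ (δ - 1) * v ^ (γ - 1)) * ((1 - u) ^ (δ - 1) * u ^ (γ - 1))) ∧
      conv2 κ F t s = ∫ p, (t * s) • κ (t - t * p.1) (s - s * p.2) • F (t * p.1) (s * p.2)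
        ∂(rectMeas 1 1) := by
  obtain ⟨C, hC0, hC⟩ := conv2_bound hκ hF b
  have hsc : ∀ t v : ℝ, 0 < t → 0 < v → v < 1 →
      t * ((t - t * v) ^ (δ - 1) * (t * v) ^ (γ - 1)) = (1 - v) ^ (δ - 1) * v ^ (γ - 1) := by
    intro t v ht h0 h1
    have e : t * (t ^ (δ - 1) * t ^ (γ - 1)) = 1 := by
      rw [← Real.rpow_add ht, show δ - 1 + (γ - 1) = -1 by linarith, Real.rpow_neg_one,
        mul_inv_cancel₀ ht.ne']
    rw [show t - t * v = t * (1 - v) by ring, Real.mul_rpow ht.le (by linarith),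
      Real.mul_rpow ht.le h0.le]
    linear_combination ((1 - v) ^ (δ - 1) * v ^ (γ - 1)) * e
  refine ⟨C, fun t s ht htb hs hsb => ?_⟩
  have hbd : ∀ v u, 0 < v → v < 1 → 0 < u → u < 1 →
        ‖(t * s) • κ (t - t * v) (s - s * u) • F (t * v) (s * u)‖ ≤
          C * ((1 - v) ^ (δ - 1) * v ^ (γ - 1)) * ((1 - u) ^ (δ - 1) * u ^ (γ - 1)) := by
    intro v u hv0 hv1 hu0 hu1
    have n1 : 0 < t - t * v := by nlinarith
    have n2 : 0 < s - s * u := by nlinarith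
    have n3 : 0 < t * v := by positivity
    have n4 : 0 < s * u := by positivity
    rw [norm_smul, Real.norm_of_nonneg (by positivity), ← hsc t v ht hv0 hv1,
      ← hsc s u hs hu0 hu1]
    calc _ ≤ (t * s) * (C * (((t - t * v) ^ (δ - 1) * (t * v) ^ (γ - 1)) *
          ((s - s * u) ^ (δ - 1) * (s * u) ^ (γ - 1)))) := by
          gcongr
          exact hC _ _ _ _ n1 (by linarith) n2 (by linarith) n3 (by linarith) n4 (by linarith)
      _ = _ := by ring
  refine ⟨hbd, ?_⟩
  have hi : Integrable (fun p : ℝ × ℝ =>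
      (t * s) • κ (t - t * p.1) (s - s * p.2) • F (t * p.1) (s * p.2)) (rectMeas 1 1) := by
    refine rect_integrable
      (Φ := fun v u => (t * s) • κ (t - t * v) (s - s * u) • F (t * v) (s * u)) one_pos one_pos ?_
      ((beta_integrable hδ hγ one_pos).const_mul C) (beta_integrable hδ hγ one_pos) hbd
    refine continuousOn_const.smul ((conv2_contOn hκ hF t s).comp
      (f := fun p : ℝ × ℝ => (t * p.1, s * p.2)) (by fun_prop) fun p hp => ?_)
    obtain ⟨⟨h1, h2⟩, h3, h4⟩ := hp
    exact ⟨⟨by positivity, by nlinarith⟩, by positivity, by nlinarith⟩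
  rw [← rect_integral (Φ := fun v u => (t * s) • κ (t - t * v) (s - s * u) • F (t * v) (s * u))
    one_pos one_pos hi, conv2]
  have e1 := intervalIntegral.smul_integral_comp_mul_left (a := 0) (b := 1)
    (fun σ => ∫ τ in (0:ℝ)..s, κ (t - σ) (s - τ) • F σ τ) t
  rw [mul_zero, mul_one] at e1
  rw [← e1, ← intervalIntegral.integral_smul]
  refine intervalIntegral.integral_congr fun v _ => ?_
  have e2 := intervalIntegral.smul_integral_comp_mul_left (a := 0) (b := 1)
    (fun τ => κ (t - t * v) (s - τ) • F (t * v) τ) s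
  rw [mul_zero, mul_one] at e2
  rw [← e2, ← mul_smul, ← intervalIntegral.integral_smul]

lemma conv2_bounded (hγ : 0 < γ) (hδ : 0 < δ) (hsum : γ + δ = 1) (hκ : RLAdm2 δ κ)
    (hF : RLAdm2 γ F) (b : ℝ) :
    ∃ C, ∀ t s, 0 < t → t ≤ b → 0 < s → s ≤ b → ‖conv2 κ F t s‖ ≤ C := by
  obtain ⟨C, hC⟩ := conv2_scale hγ hδ hsum hκ hF b
  refine ⟨∫ p : ℝ × ℝ, C * ((1 - p.1) ^ (δ - 1) * p.1 ^ (γ - 1)) *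
    ((1 - p.2) ^ (δ - 1) * p.2 ^ (γ - 1)) ∂(rectMeas 1 1), fun t s ht htb hs hsb => ?_⟩
  obtain ⟨h1, h2⟩ := hC t s ht htb hs hsb
  have hw := (intervalIntegrable_iff_integrableOn_Ioo_of_le zero_le_one).1
    (beta_integrable hδ hγ one_pos)
  rw [h2]
  exact norm_integral_le_of_norm_le ((hw.const_mul C).mul_prod hw) (ae_rect h1)

lemma conv2_continuousOn (hγ : 0 < γ) (hδ : 0 < δ) (hsum : γ + δ = 1) (hκ : RLAdm2 δ κ)
    (hF : RLAdm2 γ F) :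
    ContinuousOn (fun p : ℝ × ℝ => conv2 κ F p.1 p.2) (Ioi 0 ×ˢ Ioi 0) := by
  have key : ∀ b : ℝ,
      ContinuousOn (fun p : ℝ × ℝ => conv2 κ F p.1 p.2) (Ioo 0 b ×ˢ Ioo 0 b) := by
    intro b
    obtain ⟨C, hC⟩ := conv2_scale hγ hδ hsum hκ hF b
    have hw := (intervalIntegrable_iff_integrableOn_Ioo_of_le zero_le_one).1
      (beta_integrable hδ hγ one_pos)
    have hcont : ∀ S : Set ((ℝ × ℝ) × (ℝ × ℝ)), (∀ z ∈ S, 0 < z.1.1 ∧ 0 < z.1.2 ∧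
        0 < z.2.1 ∧ z.2.1 < 1 ∧ 0 < z.2.2 ∧ z.2.2 < 1) →
        ContinuousOn (fun z : (ℝ × ℝ) × (ℝ × ℝ) => (z.1.1 * z.1.2) •
          κ (z.1.1 - z.1.1 * z.2.1) (z.1.2 - z.1.2 * z.2.2) •
          F (z.1.1 * z.2.1) (z.1.2 * z.2.2)) S := by
      intro S hS
      refine ContinuousOn.smul (by fun_prop) (ContinuousOn.smul ?_ ?_)
      · refine hκ.cont.comp (f := fun z : (ℝ × ℝ) × (ℝ × ℝ) =>
          (z.1.1 - z.1.1 * z.2.1, z.1.2 - z.1.2 * z.2.2)) (by fun_prop) fun z hz => ?_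
        obtain ⟨h1, h2, h3, h4, h5, h6⟩ := hS z hz
        exact ⟨show 0 < z.1.1 - z.1.1 * z.2.1 by nlinarith,
          show 0 < z.1.2 - z.1.2 * z.2.2 by nlinarith⟩
      · refine hF.cont.comp (f := fun z : (ℝ × ℝ) × (ℝ × ℝ) =>
          (z.1.1 * z.2.1, z.1.2 * z.2.2)) (by fun_prop) fun z hz => ?_
        obtain ⟨h1, h2, h3, h4, h5, h6⟩ := hS z hz
        exact ⟨mul_pos h1 h3, mul_pos h2 h5⟩
    refine ContinuousOn.congr (f := fun q : ℝ × ℝ => ∫ p, (q.1 * q.2) •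
      κ (q.1 - q.1 * p.1) (q.2 - q.2 * p.2) • F (q.1 * p.1) (q.2 * p.2) ∂(rectMeas 1 1)) ?_
      fun q hq => (hC q.1 q.2 hq.1.1 hq.1.2.le hq.2.1 hq.2.2.le).2
    refine continuousOn_of_dominated (fun q hq => ?_)
      (fun q hq => ae_rect (hC q.1 q.2 hq.1.1 hq.1.2.le hq.2.1 hq.2.2.le).1)
      ((hw.const_mul C).mul_prod hw) (ae_rect fun v u h1 h2 h3 h4 => ?_)
    · refine rect_meas (Φ := fun v u => (q.1 * q.2) •
        κ (q.1 - q.1 * v) (q.2 - q.2 * u) • F (q.1 * v) (q.2 * u)) ?_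
      exact (hcont (Prod.mk q '' (Ioo 0 1 ×ˢ Ioo 0 1)) (by
        rintro _ ⟨p, hp, rfl⟩
        exact ⟨hq.1.1, hq.2.1, hp.1.1, hp.1.2, hp.2.1, hp.2.2⟩)).comp
        (f := fun p => (q, p)) (by fun_prop) (mapsTo_image _ _)
    · exact (hcont ((fun q => (q, (v, u))) '' (Ioo 0 b ×ˢ Ioo 0 b)) (by
        rintro _ ⟨q, hq, rfl⟩
        exact ⟨hq.1.1, hq.2.1, h1, h2, h3, h4⟩)).comp
        (f := fun q => (q, (v, u))) (by fun_prop) (mapsTo_image _ _)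
  intro q hq
  have h1 : q.1 < max q.1 q.2 + 1 := by linarith [le_max_left q.1 q.2]
  have h2 : q.2 < max q.1 q.2 + 1 := by linarith [le_max_right q.1 q.2]
  exact ((key (max q.1 q.2 + 1)).continuousAt ((isOpen_Ioo.prod isOpen_Ioo).mem_nhds
    ⟨⟨hq.1, h1⟩, hq.2, h2⟩)).continuousWithinAt

/-- Integration in the first variable falls on the kernel, by Fubini on the triangle
`0 < σ < r < t`. -/
lemma integral_conv2 [CompleteSpace X] (hγ : 0 < γ) (hδ : 0 < δ) (hκ : RLAdm2 δ κ)
    (hF : RLAdm2 γ F) {t s : ℝ} (ht : 0 < t) (hs : 0 < s) :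
    ∫ r in (0:ℝ)..t, conv2 κ F r s = conv2 (fun a b => ∫ u in (0:ℝ)..a, κ u b) F t s := by
  obtain ⟨C, hC0, hC⟩ := conv2_bound hκ hF (max t s)
  have l1 := le_max_left t s
  have l2 := le_max_right t s
  set B := ∫ τ in (0:ℝ)..s, (s - τ) ^ (δ - 1) * τ ^ (γ - 1) with hB
  have hbi := beta_integrable hδ hγ hs
  have hbd : ∀ a x τ, 0 < a → a ≤ t → 0 < x → x ≤ t → 0 < τ → τ < s →
      ‖κ a (s - τ) • F x τ‖ ≤ C * (a ^ (δ - 1) * x ^ (γ - 1)) *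
        ((s - τ) ^ (δ - 1) * τ ^ (γ - 1)) := by
    intro a x τ h1 h2 h3 h4 h5 h6
    rw [mul_assoc]
    exact hC _ _ _ _ h1 (by linarith) (by linarith) (by linarith) h3 (by linarith) h5
      (by linarith)
  have hcont : ∀ S : Set ((ℝ × ℝ) × ℝ), (∀ z ∈ S, 0 < z.1.1 ∧ 0 < z.1.2 ∧ 0 < z.2 ∧ z.2 < s) →
      ContinuousOn (fun z : (ℝ × ℝ) × ℝ => κ z.1.1 (s - z.2) • F z.1.2 z.2) S := by
    intro S hS
    refine ContinuousOn.smul ?_ ?_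
    · exact hκ.cont.comp (f := fun z : (ℝ × ℝ) × ℝ => (z.1.1, s - z.2)) (by fun_prop)
        fun z hz => ⟨(hS z hz).1, sub_pos.2 (hS z hz).2.2.2⟩
    · exact hF.cont.comp (f := fun z : (ℝ × ℝ) × ℝ => (z.1.2, z.2)) (by fun_prop)
        fun z hz => ⟨(hS z hz).2.1, (hS z hz).2.2.1⟩
  have hsw := tri_swap (C := C * B) one_pos hδ hγ ht
    (fun r σ => ∫ τ in (0:ℝ)..s, κ (r - σ) (s - τ) • F σ τ) ?_ ?_
  · change ∫ r in (0:ℝ)..t, ∫ σ in (0:ℝ)..r, ∫ τ in (0:ℝ)..s, κ (r - σ) (s - τ) • F σ τ = _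
    rw [hsw, conv2]
    refine intervalIntegral.integral_congr_Ioo_of_le ht.le fun σ hσ => ?_
    have hσt : 0 < t - σ := sub_pos.2 hσ.2
    have e := intervalIntegral.integral_comp_sub_right (a := σ) (b := t)
      (fun r => ∫ τ in (0:ℝ)..s, κ r (s - τ) • F σ τ) σ
    rw [sub_self] at e
    rw [e, rect_swap (Φ := fun r τ => κ r (s - τ) • F σ τ) hσt hs]
    · refine intervalIntegral.integral_congr fun τ _ => ?_
      exact intervalIntegral.integral_smul_const _ _
    · refine rect_integrable (Φ := fun r τ => κ r (s - τ) • F σ τ)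
        (g := fun r => C * (r ^ (δ - 1) * σ ^ (γ - 1))) hσt hs ?_ ?_ hbi ?_
      · exact (hcont ((fun p : ℝ × ℝ => ((p.1, σ), p.2)) '' (Ioo 0 (t - σ) ×ˢ Ioo 0 s)) (by
          rintro _ ⟨p, hp, rfl⟩
          exact ⟨hp.1.1, hσ.1, hp.2.1, hp.2.2⟩)).comp
          (f := fun p : ℝ × ℝ => ((p.1, σ), p.2)) (by fun_prop) (mapsTo_image _ _)
      · exact ((intervalIntegral.intervalIntegrable_rpow' (by linarith)).mul_const _).const_mul _
      · intro r τ h1 h2 h3 h4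
        exact hbd r σ τ h1 (by linarith [hσ.1]) hσ.1 hσ.2.le h3 h4
  · have hw := (intervalIntegrable_iff_integrableOn_Ioo_of_le hs.le).1 hbi
    simp only [intervalIntegral.integral_of_le hs.le, integral_Ioc_eq_integral_Ioo]
    intro q hq
    have hq' : 0 < q.2 ∧ q.2 < q.1 ∧ q.1 < t := hq
    have hlt : 0 < q.1 - q.2 := sub_pos.2 hq'.2.1
    set e : ℝ × ℝ → ℝ := fun p => C * ((p.1 - p.2) ^ (δ - 1) * p.2 ^ (γ - 1)) with he
    have hec : ContinuousAt e q := by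
      refine continuousAt_const.mul (ContinuousAt.mul ?_ ?_)
      · exact (continuousAt_fst.sub continuousAt_snd).rpow_const (Or.inl hlt.ne')
      · exact continuousAt_snd.rpow_const (Or.inl hq'.1.ne')
    have hop : IsOpen {p : ℝ × ℝ | 0 < p.2 ∧ p.2 < p.1 ∧ p.1 < t} :=
      (isOpen_lt continuous_const continuous_snd).inter
        ((isOpen_lt continuous_snd continuous_fst).inter
          (isOpen_lt continuous_fst continuous_const))
    have hcont' : ∀ S : Set ((ℝ × ℝ) × ℝ),
        (∀ z ∈ S, 0 < z.1.2 ∧ z.1.2 < z.1.1 ∧ 0 < z.2 ∧ z.2 < s) →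
        ContinuousOn (fun z : (ℝ × ℝ) × ℝ => κ (z.1.1 - z.1.2) (s - z.2) • F z.1.2 z.2) S :=
      fun S hS => (hcont ((fun z : (ℝ × ℝ) × ℝ => ((z.1.1 - z.1.2, z.1.2), z.2)) '' S) (by
        rintro _ ⟨z, hz, rfl⟩
        obtain ⟨h1, h2, h3, h4⟩ := hS z hz
        exact ⟨sub_pos.2 h2, h1, h3, h4⟩)).comp
        (f := fun z : (ℝ × ℝ) × ℝ => ((z.1.1 - z.1.2, z.1.2), z.2)) (by fun_prop)
        (mapsTo_image _ _)
    refine (continuousAt_of_dominated (F := fun (p : ℝ × ℝ) τ => κ (p.1 - p.2) (s - τ) • F p.2 τ)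
      (bound := fun τ => (e q + 1) * ((s - τ) ^ (δ - 1) * τ ^ (γ - 1)))
      ?_ ?_ (hw.const_mul _) ?_).continuousWithinAt
    · filter_upwards [hop.mem_nhds hq'] with p hp
      refine ContinuousOn.aestronglyMeasurable ?_ measurableSet_Ioo
      exact (hcont' ((fun τ => (p, τ)) '' Ioo 0 s) (by
        rintro _ ⟨τ, hτ, rfl⟩
        exact ⟨hp.1, hp.2.1, hτ.1, hτ.2⟩)).comp
        (f := fun τ => (p, τ)) (by fun_prop) (mapsTo_image _ _)
    · filter_upwards [hop.mem_nhds hq', hec.eventually (gt_mem_nhds (lt_add_one (e q)))]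
        with p hp hpe
      refine (ae_restrict_iff' measurableSet_Ioo).2 (Eventually.of_forall fun τ hτ => ?_)
      have n1 : 0 ≤ (s - τ) ^ (δ - 1) := Real.rpow_nonneg (sub_pos.2 hτ.2).le _
      have n2 : 0 ≤ τ ^ (γ - 1) := Real.rpow_nonneg hτ.1.le _
      refine (hbd (p.1 - p.2) p.2 τ (sub_pos.2 hp.2.1) (by linarith [hp.1, hp.2.2]) hp.1
        (by linarith [hp.2.1, hp.2.2]) hτ.1 hτ.2).trans ?_
      exact mul_le_mul_of_nonneg_right hpe.le (mul_nonneg n1 n2)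
    · refine (ae_restrict_iff' measurableSet_Ioo).2 (Eventually.of_forall fun τ hτ => ?_)
      refine ContinuousOn.continuousAt ?_ (hop.mem_nhds hq')
      exact (hcont' ((fun p => (p, τ)) '' {p : ℝ × ℝ | 0 < p.2 ∧ p.2 < p.1 ∧ p.1 < t}) (by
        rintro _ ⟨p, hp, rfl⟩
        exact ⟨hp.1, hp.2.1, hτ.1, hτ.2⟩)).comp
        (f := fun p => (p, τ)) (by fun_prop) (mapsTo_image _ _)
  · intro r σ h1 h2 h3
    rw [sub_self, Real.rpow_zero, one_mul, mul_right_comm, hB,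
      ← intervalIntegral.integral_const_mul]
    have hw := (intervalIntegrable_iff_integrableOn_Ioo_of_le hs.le).1 hbi
    simp only [intervalIntegral.integral_of_le hs.le, integral_Ioc_eq_integral_Ioo]
    refine norm_integral_le_of_norm_le (hw.const_mul _)
      ((ae_restrict_iff' measurableSet_Ioo).2 (Eventually.of_forall fun τ hτ => ?_))
    exact hbd _ _ _ (by linarith) (by linarith) h1 (by linarith) hτ.1 hτ.2

end conv2

/-! ### The cosine equation -/

/-- If both primitives of `U`, in the first and in the second variable, agree, then `U = 0`: the
common primitive `A` satisfies `∂₁A = ∂₂A = U`, hence is constant along antidiagonals, and it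
vanishes at the boundary. -/
lemma eq_zero_of_integral_eq [CompleteSpace X] {U : ℝ → ℝ → X}
    (hc : ContinuousOn (fun p : ℝ × ℝ => U p.1 p.2) (Ioi 0 ×ˢ Ioi 0))
    (hb : ∀ b : ℝ, ∃ C, ∀ t s, 0 < t → t ≤ b → 0 < s → s ≤ b → ‖U t s‖ ≤ C)
    (h : ∀ t s, 0 < t → 0 < s → ∫ r in (0:ℝ)..t, U r s = ∫ r in (0:ℝ)..s, U t r)
    {t s : ℝ} (ht : 0 < t) (hs : 0 < s) : U t s = 0 := by
  have c1 : ∀ s, 0 < s → ContinuousOn (fun r => U r s) (Ioi 0) := fun s hs =>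
    hc.comp (f := fun r => (r, s)) (by fun_prop) fun r hr => ⟨hr, hs⟩
  have c2 : ∀ t, 0 < t → ContinuousOn (fun r => U t r) (Ioi 0) := fun t ht =>
    hc.comp (f := fun r => (t, r)) (by fun_prop) fun r hr => ⟨ht, hr⟩
  have i1 : ∀ t s, 0 < t → 0 < s → IntervalIntegrable (fun r => U r s) volume 0 t := by
    intro t s ht hs
    obtain ⟨C, hC⟩ := hb (max t s)
    exact integrable_of_bound ht ((c1 s hs).mono fun r hr => hr.1)
      (intervalIntegrable_const (c := C)) fun r h0 h1 =>
        hC r s h0 (h1.le.trans (le_max_left _ _)) hs (le_max_right _ _)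
  have i2 : ∀ t s, 0 < t → 0 < s → IntervalIntegrable (fun r => U t r) volume 0 s := by
    intro t s ht hs
    obtain ⟨C, hC⟩ := hb (max t s)
    exact integrable_of_bound hs ((c2 t ht).mono fun r hr => hr.1)
      (intervalIntegrable_const (c := C)) fun r h0 h1 =>
        hC t r ht (le_max_left _ _) h0 (h1.le.trans (le_max_right _ _))
  set A : ℝ → ℝ → X := fun t s => ∫ r in (0:ℝ)..t, U r s with hA
  have d1 : ∀ t s, 0 < t → 0 < s → HasDerivAt (fun t => A t s) (U t s) t := fun t s ht hs =>
    intervalIntegral.integral_hasDerivAt_right (i1 t s ht hs)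
      ((c1 s hs).stronglyMeasurableAtFilter isOpen_Ioi t ht)
      ((c1 s hs).continuousAt (Ioi_mem_nhds ht))
  have d2 : ∀ t s, 0 < t → 0 < s → HasDerivAt (fun s => A t s) (U t s) s := by
    intro t s ht hs
    refine (intervalIntegral.integral_hasDerivAt_right (i2 t s ht hs)
      ((c2 t ht).stronglyMeasurableAtFilter isOpen_Ioi s hs)
      ((c2 t ht).continuousAt (Ioi_mem_nhds hs))).congr_of_eventuallyEq ?_
    filter_upwards [lt_mem_nhds hs] with r hr using h t r ht hr
  have d : ∀ c r, 0 < r → r < c → HasDerivAt (fun r => A r (c - r)) 0 r := by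
    intro c r h0 h1
    have hcr : 0 < c - r := sub_pos.2 h1
    have hmem : Ioi (0:ℝ) ×ˢ Ioi (0:ℝ) ∈ 𝓝 (r, c - r) :=
      (isOpen_Ioi.prod isOpen_Ioi).mem_nhds ⟨h0, hcr⟩
    have hcU : ContinuousAt (fun p : ℝ × ℝ => ContinuousLinearMap.toSpanSingleton ℝ (U p.1 p.2))
        (r, c - r) :=
      (ContinuousLinearMap.toSpanSingletonCLE (𝕜 := ℝ) (E := X)).continuous.continuousAt.comp
        (hc.continuousAt hmem)
    have hs := hasStrictFDerivAt_uncurry_coprod (𝕜 := ℝ) (u := (r, c - r)) (f := A)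
      (f₁ := fun t s => ContinuousLinearMap.toSpanSingleton ℝ (U t s))
      (f₂ := fun t s => ContinuousLinearMap.toSpanSingleton ℝ (U t s))
      (by filter_upwards [hmem] with p hp using (d1 p.1 p.2 hp.1 hp.2).hasFDerivAt)
      (by filter_upwards [hmem] with p hp using (d2 p.1 p.2 hp.1 hp.2).hasFDerivAt) hcU hcU
    have hl : HasDerivAt (fun r : ℝ => (r, c - r)) ((1 : ℝ), (-1 : ℝ)) r :=
      (hasDerivAt_id r).prodMk (by simpa using (hasDerivAt_id r).const_sub c)
    have := hs.hasFDerivAt.comp_hasDerivAt r hl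
    simpa using! this
  have hA0 : ∀ t s, 0 < t → 0 < s → A t s = 0 := by
    intro t s ht hs
    obtain ⟨C, hC⟩ := hb (t + s)
    have hconst : ∀ r ∈ Ioo 0 (t + s), A r (t + s - r) = A t s := by
      intro r hr
      have e := isOpen_Ioo.is_const_of_deriv_eq_zero (f := fun r => A r (t + s - r))
        (s := Ioo 0 (t + s)) isPreconnected_Ioo
        (fun q hq => (d (t + s) q hq.1 hq.2).differentiableAt.differentiableWithinAt)
        (fun q hq => (d (t + s) q hq.1 hq.2).deriv) hr
        (show t ∈ Ioo 0 (t + s) from ⟨ht, by linarith⟩)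
      simpa using e
    have hle : ∀ r ∈ Ioo 0 (t + s), ‖A t s‖ ≤ C * r := by
      intro r hr
      rw [← hconst r hr]
      have := intervalIntegral.norm_integral_le_of_norm_le_const (a := 0) (b := r) (C := C)
        (f := fun q => U q (t + s - r)) fun q hq => by
          rw [uIoc_of_le hr.1.le] at hq
          exact hC q _ hq.1 (hq.2.trans hr.2.le) (sub_pos.2 hr.2) (by linarith [hr.1])
      rwa [sub_zero, abs_of_pos hr.1] at this
    have hlim : Tendsto (fun r : ℝ => C * r) (𝓝[>] 0) (𝓝 (C * 0)) :=
      ((continuous_const.mul continuous_id).tendsto 0).mono_left nhdsWithin_le_nhds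
    rw [mul_zero] at hlim
    have : ‖A t s‖ ≤ 0 := ge_of_tendsto hlim
      (by filter_upwards [Ioo_mem_nhdsGT (by linarith : 0 < t + s)] with r hr using hle r hr)
    simpa using this
  have h0 : (fun t => A t s) =ᶠ[𝓝 t] fun _ => 0 := by
    filter_upwards [lt_mem_nhds ht] with r hr using hA0 r s hr hs
  exact (d1 t s ht hs).unique ((hasDerivAt_const t (0 : X)).congr_of_eventuallyEq h0)

/-- The kernel of the cosine functional equation, with `δ = 2 - α`. -/
noncomputable def cosKer (δ a b : ℝ) : ℝ := a ^ (δ - 1) + b ^ (δ - 1) - (a + b) ^ (δ - 1)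

/-- The symmetric part of the primitive of `cosKer δ` in one variable, the remaining part being
`a * b ^ (δ - 1)`. Its symmetry is what makes it cancel between the two primitives. -/
noncomputable def symKer (δ a b : ℝ) : ℝ := (a ^ δ + b ^ δ - (a + b) ^ δ) / δ

lemma integral_cosKer {δ a b : ℝ} (hδ : 0 < δ) :
    ∫ u in (0:ℝ)..a, cosKer δ u b = a * b ^ (δ - 1) + symKer δ a b := by
  have i1 : IntervalIntegrable (fun u : ℝ => u ^ (δ - 1)) volume 0 a :=
    intervalIntegral.intervalIntegrable_rpow' (by linarith)
  have i2 : IntervalIntegrable (fun u : ℝ => (u + b) ^ (δ - 1)) volume 0 a := by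
    have := (intervalIntegral.intervalIntegrable_rpow' (r := δ - 1) (a := b) (b := a + b)
      (by linarith)).comp_add_right b
    simpa using this
  simp only [cosKer, symKer]
  rw [intervalIntegral.integral_sub (i1.add intervalIntegrable_const) i2,
    intervalIntegral.integral_add i1 intervalIntegrable_const,
    intervalIntegral.integral_comp_add_right (fun u => u ^ (δ - 1)),
    integral_rpow (Or.inl (by linarith)), integral_rpow (Or.inl (by linarith)),
    intervalIntegral.integral_const, sub_add_cancel, zero_add, Real.zero_rpow hδ.ne', sub_zero,
    smul_eq_mul]
  ring

lemma RLAdm2.div_const {δ : ℝ} {κ : ℝ → ℝ → ℝ} (h : RLAdm2 δ κ) (c : ℝ) :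
    RLAdm2 δ (fun a b => κ a b / c) where
  cont := h.cont.div_const c
  bound b := by
    obtain ⟨M, h0, hM⟩ := h.bound b
    refine ⟨M / |c|, by positivity, fun x y k1 k2 k3 k4 => ?_⟩
    rw [norm_div, div_mul_eq_mul_div]
    exact div_le_div_of_nonneg_right (hM x y k1 k2 k3 k4) (abs_nonneg c)

lemma RLAdm2.left_rpow {δ p : ℝ} (hδ : δ ≤ 1) (hp : δ - 1 ≤ p) :
    RLAdm2 δ (fun a _ : ℝ => a ^ p) := by
  simpa using RLAdm2.rpow_mul_rpow (q := 0) hp (by linarith)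

lemma RLAdm2.symKer {δ : ℝ} (hδ : δ ≤ 1) : RLAdm2 δ (symKer δ) :=
  (((RLAdm2.left_rpow hδ (by linarith)).add (RLAdm2.left_rpow hδ (by linarith)).flip).sub
    (RLAdm2.add_rpow hδ (by linarith))).div_const δ

lemma RLAdm2.cosKer {δ : ℝ} (hδ : δ ≤ 1) : RLAdm2 δ (cosKer δ) :=
  ((RLAdm2.left_rpow hδ le_rfl).add (RLAdm2.left_rpow hδ le_rfl).flip).sub
    (RLAdm2.add_rpow hδ le_rfl)

section cosine

variable [CompleteSpace X] {γ : ℝ} {T : ℝ → X →L[ℝ] X} {P : ℝ → ℝ → X →L[ℝ] X}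

lemma RLFam.adm2 (hT : RLFam γ T) (x : X) : RLAdm2 γ (fun σ τ => T σ (T τ x)) where
  cont := hT.cont_comp continuousOn_fst (fun p hp => hp.1)
    ((hT.cont x).comp continuousOn_snd fun p hp => hp.2)
  bound b := by
    obtain ⟨M, h0, hM⟩ := hT.bound b
    refine ⟨M * M * ‖x‖, by positivity, fun t s k1 k2 k3 k4 => ?_⟩
    calc _ ≤ M * t ^ (γ - 1) * (M * s ^ (γ - 1) * ‖x‖) := by
          refine (hM t k1 k2 _).trans ?_
          gcongr
          exact hM s k3 k4 x
      _ = _ := by ring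

/-- Convolution with a product kernel is a product of Riemann-Liouville operators. -/
lemma conv2_rpow (hγ : 0 < γ) (hT : RLFam γ T) (hP : IsRLOp T P) {p q t s : ℝ} (hp : 0 < p)
    (hq : 0 < q) (ht : 0 < t) (hs : 0 < s) (x : X) :
    conv2 (fun a b => a ^ (p - 1) * b ^ (q - 1)) (fun σ τ => T σ (T τ x)) t s =
      (Real.Gamma p * Real.Gamma q) • P p t (P q s x) := by
  have gp := (Real.Gamma_pos_of_pos hp).ne'
  have gq := (Real.Gamma_pos_of_pos hq).ne'
  have inner : ∀ σ, ∫ τ in (0:ℝ)..s, ((t - σ) ^ (p - 1) * (s - τ) ^ (q - 1)) • T σ (T τ x) =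
      Real.Gamma q • (t - σ) ^ (p - 1) • T σ (P q s x) := by
    intro σ
    simp only [mul_smul]
    rw [intervalIntegral.integral_smul, smul_comm]
    congr 1
    rw [hP _ _ hq hs, RLint, map_smul, smul_inv_smul₀ gq,
      ← (T σ).intervalIntegral_comp_comm ((hT.adm x).kernel_integrable hγ hq hs)]
    simp only [map_smul]
  rw [conv2]
  simp only [inner]
  rw [intervalIntegral.integral_smul, hP _ _ hp ht, RLint, smul_smul, mul_comm (Real.Gamma p),
    mul_assoc, mul_inv_cancel₀ gp, mul_one]

/-- The functional equation of a fractional cosine function, verbatim from the definition. -/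
def CosEq (α : ℝ) (T : ℝ → X →L[ℝ] X) : Prop :=
  ∀ x : X, ∀ t > (0:ℝ), ∀ s > (0:ℝ),
    Real.Gamma (2 - α) • (∫ σ in (0:ℝ)..(t + s), T σ x) =
      (∫ σ in (0:ℝ)..t, ∫ τ in (0:ℝ)..s, (t - σ) ^ (1 - α) • T σ (T τ x)) +
      (∫ σ in (0:ℝ)..t, ∫ τ in (0:ℝ)..s, (s - τ) ^ (1 - α) • T σ (T τ x)) -
      (∫ σ in (0:ℝ)..t, ∫ τ in (0:ℝ)..s, (t + s - σ - τ) ^ (1 - α) • T σ (T τ x))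

/-- The cosine equation says that the defect `Γ(2 - α) P₁(t + s) - cosKer ∗ T(σ)T(τ)` vanishes. -/
lemma cosEq_iff_conv2 {α : ℝ} (h1 : 1 < α) (h2 : α < 2) (hT : RLFam (α - 1) T)
    (hP : IsRLOp T P) :
    CosEq α T ↔ ∀ x t s, 0 < t → 0 < s →
      Real.Gamma (2 - α) • P 1 (t + s) x -
        conv2 (cosKer (2 - α)) (fun σ τ => T σ (T τ x)) t s = 0 := by
  have hγ : 0 < α - 1 := by linarith
  have hδ : 0 < 2 - α := by linarith
  have hδ1 : 2 - α ≤ 1 := by linarith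
  have e : ∀ x t s, 0 < t → 0 < s →
      conv2 (cosKer (2 - α)) (fun σ τ => T σ (T τ x)) t s =
      (∫ σ in (0:ℝ)..t, ∫ τ in (0:ℝ)..s, (t - σ) ^ (1 - α) • T σ (T τ x)) +
      (∫ σ in (0:ℝ)..t, ∫ τ in (0:ℝ)..s, (s - τ) ^ (1 - α) • T σ (T τ x)) -
      (∫ σ in (0:ℝ)..t, ∫ τ in (0:ℝ)..s, (t + s - σ - τ) ^ (1 - α) • T σ (T τ x)) := by
    intro x t s ht hs
    have k1 : RLAdm2 (2 - α) (fun a _ : ℝ => a ^ (2 - α - 1)) := RLAdm2.left_rpow hδ1 le_rfl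
    have k3 : RLAdm2 (2 - α) (fun a b : ℝ => (a + b) ^ (2 - α - 1)) :=
      RLAdm2.add_rpow hδ1 le_rfl
    have hs1 := conv2_sub hγ hδ (k1.add k1.flip) k3 (hT.adm2 x) ht hs
    have hs2 := conv2_add hγ hδ k1 k1.flip (hT.adm2 x) ht hs
    change conv2 (fun a b => a ^ (2 - α - 1) + b ^ (2 - α - 1) - (a + b) ^ (2 - α - 1)) _ t s = _
    rw [hs1, hs2]
    simp only [conv2]
    have e1 : 2 - α - 1 = 1 - α := by ring
    have e2 : ∀ σ τ : ℝ, t - σ + (s - τ) = t + s - σ - τ := fun σ τ => by ring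
    simp only [e1, e2]
  refine forall_congr' fun x => forall_congr' fun t => ?_
  constructor
  · intro h s ht hs
    rw [e x t s ht hs, hP _ _ one_pos (add_pos ht hs), RLint_one, sub_eq_zero]
    exact h ht s hs
  · intro h ht s hs
    have := h s ht hs
    rwa [e x t s ht hs, hP _ _ one_pos (add_pos ht hs), RLint_one, sub_eq_zero] at this

/-- Let `U` be the defect of the cosine equation. Its primitives in `t` and in `s` share the terms
`P₂(t + s)` and `symKer ∗ T(σ)T(τ)`, so that their difference is `Γ(2 - α)` times the defect of
`EqE`. Hence the cosine equation gives `EqE`, and the converse is `eq_zero_of_integral_eq`. -/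
lemma cosEq_iff_eqE {α : ℝ} (h1 : 1 < α) (h2 : α < 2) (hT : RLFam (α - 1) T)
    (hP : IsRLOp T P) : CosEq α T ↔ EqE α P := by
  rw [cosEq_iff_conv2 h1 h2 hT hP]
  have hγ : 0 < α - 1 := by linarith
  have hδ : 0 < 2 - α := by linarith
  have hδ1 : 2 - α ≤ 1 := by linarith
  have hsum : α - 1 + (2 - α) = 1 := by ring
  have hG := (Real.Gamma_pos_of_pos hδ).ne'
  have hκ : RLAdm2 (2 - α) (cosKer (2 - α)) := RLAdm2.cosKer hδ1
  set N : X → ℝ → ℝ → X := fun x t s => conv2 (cosKer (2 - α)) (fun σ τ => T σ (T τ x)) t s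
    with hN
  set U : X → ℝ → ℝ → X := fun x t s => Real.Gamma (2 - α) • P 1 (t + s) x - N x t s with hU
  have adP : ∀ x, RLAdm (α - 1) (fun t => P 1 t x) := fun x => hP.adm hT hγ one_pos x
  have cN : ∀ x, ContinuousOn (fun p : ℝ × ℝ => N x p.1 p.2) (Ioi 0 ×ˢ Ioi 0) := fun x =>
    conv2_continuousOn hγ hδ hsum hκ (hT.adm2 x)
  have bN : ∀ x b, ∃ C, ∀ t s, 0 < t → t ≤ b → 0 < s → s ≤ b → ‖N x t s‖ ≤ C := fun x b =>
    conv2_bounded hγ hδ hsum hκ (hT.adm2 x) b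
  -- The primitives of `N` in either variable.
  have iN1 : ∀ x t s, 0 < t → 0 < s → ∫ r in (0:ℝ)..t, N x r s =
      Real.Gamma (2 - α) • P 2 t (P (2 - α) s x) +
        conv2 (symKer (2 - α)) (fun σ τ => T σ (T τ x)) t s := by
    intro x t s ht hs
    have k1 : RLAdm2 (2 - α) (fun a b : ℝ => a ^ (2 - 1 : ℝ) * b ^ (2 - α - 1)) :=
      RLAdm2.rpow_mul_rpow (by linarith) le_rfl
    have e := conv2_rpow hγ hT hP (p := 2) two_pos hδ ht hs x
    rw [Real.Gamma_two, one_mul] at e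
    rw [integral_conv2 hγ hδ hκ (hT.adm2 x) ht hs, ← e,
      ← conv2_add hγ hδ k1 (RLAdm2.symKer hδ1) (hT.adm2 x) ht hs]
    refine conv2_congr ht hs fun a b ha hb => ?_
    rw [integral_cosKer hδ]
    norm_num
  have iN2 : ∀ x t s, 0 < t → 0 < s → ∫ r in (0:ℝ)..s, N x t r =
      Real.Gamma (2 - α) • P (2 - α) t (P 2 s x) +
        conv2 (symKer (2 - α)) (fun σ τ => T σ (T τ x)) t s := by
    intro x t s ht hs
    have k1 : RLAdm2 (2 - α) (fun a b : ℝ => a ^ (2 - α - 1) * b ^ (2 - 1 : ℝ)) :=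
      RLAdm2.rpow_mul_rpow le_rfl (by linarith)
    have e := conv2_rpow hγ hT hP (q := 2) hδ two_pos ht hs x
    rw [Real.Gamma_two, mul_one] at e
    have k2 := k1.add (RLAdm2.symKer hδ1)
    have hfl : ∫ r in (0:ℝ)..s, N x t r = ∫ r in (0:ℝ)..s,
        conv2 (fun a b => cosKer (2 - α) b a) (fun σ τ => T τ (T σ x)) r t :=
      intervalIntegral.integral_congr_Ioo_of_le hs.le fun r hr =>
        conv2_flip hγ hδ hκ (hT.adm2 x) ht hr.1
    rw [hfl, integral_conv2 hγ hδ hκ.flip (hT.adm2 x).flip hs ht, ← e,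
      ← conv2_add hγ hδ k1 (RLAdm2.symKer hδ1) (hT.adm2 x) ht hs,
      conv2_flip hγ hδ k2 (hT.adm2 x) ht hs]
    refine conv2_congr hs ht fun a b ha hb => ?_
    have e1 : ∀ u, cosKer (2 - α) b u = cosKer (2 - α) u b := fun u => by
      simp only [cosKer, add_comm]
    have e2 : symKer (2 - α) b a = symKer (2 - α) a b := by
      simp only [symKer, add_comm]
    simp only [e1, e2]
    rw [integral_cosKer hδ]
    norm_num [mul_comm]
  have iP : ∀ x t s, 0 < t → 0 < s → ∫ r in (0:ℝ)..t, P 1 (r + s) x = P 2 (t + s) x - P 2 s x := by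
    intro x t s ht hs
    have h2' : ∀ r, 0 < r → ∫ q in (0:ℝ)..r, P 1 q x = P 2 r x := by
      intro r hr
      rw [← RLint_one, hP.rl hT hγ one_pos one_pos hr, one_add_one_eq_two]
    rw [intervalIntegral.integral_comp_add_right (fun r => P 1 r x), zero_add, ← h2' _ hs,
      ← h2' _ (add_pos ht hs)]
    exact (intervalIntegral.integral_interval_sub_left ((adP x).integrable hγ (add_pos ht hs))
      ((adP x).integrable hγ hs)).symm
  have intP : ∀ x t s, 0 < t → 0 < s →
      IntervalIntegrable (fun r => P 1 (r + s) x) volume 0 t := by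
    intro x t s ht hs
    refine ContinuousOn.intervalIntegrable ((adP x).cont.comp (by fun_prop) fun r hr => ?_)
    rw [uIcc_of_le ht.le] at hr
    exact add_pos_of_nonneg_of_pos hr.1 hs
  have iU1 : ∀ x t s, 0 < t → 0 < s → ∫ r in (0:ℝ)..t, U x r s =
      Real.Gamma (2 - α) • (P 2 (t + s) x - P 2 s x) -
      (Real.Gamma (2 - α) • P 2 t (P (2 - α) s x) +
        conv2 (symKer (2 - α)) (fun σ τ => T σ (T τ x)) t s) := by
    intro x t s ht hs
    have iN : IntervalIntegrable (fun r => N x r s) volume 0 t := by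
      obtain ⟨C, hC⟩ := bN x (max t s)
      refine integrable_of_bound ht ?_ (intervalIntegrable_const (c := C)) fun r k0 k1 =>
        hC r s k0 (k1.le.trans (le_max_left _ _)) hs (le_max_right _ _)
      exact (cN x).comp (f := fun r => (r, s)) (by fun_prop) fun r hr => ⟨hr.1, hs⟩
    have ip : IntervalIntegrable (fun r => Real.Gamma (2 - α) • P 1 (r + s) x) volume 0 t :=
      (intP x t s ht hs).smul _
    rw [hU]
    simp only
    rw [intervalIntegral.integral_sub ip iN,
      intervalIntegral.integral_smul, iP x t s ht hs, iN1 x t s ht hs]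
  have iU2 : ∀ x t s, 0 < t → 0 < s → ∫ r in (0:ℝ)..s, U x t r =
      Real.Gamma (2 - α) • (P 2 (t + s) x - P 2 t x) -
      (Real.Gamma (2 - α) • P (2 - α) t (P 2 s x) +
        conv2 (symKer (2 - α)) (fun σ τ => T σ (T τ x)) t s) := by
    intro x t s ht hs
    have iN : IntervalIntegrable (fun r => N x t r) volume 0 s := by
      obtain ⟨C, hC⟩ := bN x (max t s)
      refine integrable_of_bound hs ?_ (intervalIntegrable_const (c := C)) fun r k0 k1 =>
        hC t r ht (le_max_left _ _) k0 (k1.le.trans (le_max_right _ _))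
      exact (cN x).comp (f := fun r => (t, r)) (by fun_prop) fun r hr => ⟨ht, hr.1⟩
    have ip : IntervalIntegrable (fun r => Real.Gamma (2 - α) • P 1 (r + t) x) volume 0 s :=
      (intP x s t hs ht).smul _
    rw [hU]
    simp only [add_comm t]
    rw [intervalIntegral.integral_sub ip iN,
      intervalIntegral.integral_smul, iP x s t hs ht, iN2 x t s ht hs]
  have key : ∀ x t s, 0 < t → 0 < s →
      (∫ r in (0:ℝ)..t, U x r s) - ∫ r in (0:ℝ)..s, U x t r =
      Real.Gamma (2 - α) • ((P 2 t x - P 2 s x) -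
        (P 2 t (P (2 - α) s x) - P (2 - α) t (P 2 s x))) := by
    intro x t s ht hs
    rw [iU1 x t s ht hs, iU2 x t s ht hs]
    simp only [smul_sub]
    abel
  constructor
  · intro h x t s ht hs
    have e := key x t s ht hs
    rw [intervalIntegral.integral_congr_Ioo_of_le (g := fun _ => 0) ht.le fun r hr =>
        h x r s hr.1 hs,
      intervalIntegral.integral_congr_Ioo_of_le (g := fun _ => 0) hs.le fun r hr =>
        h x t r ht hr.1, intervalIntegral.integral_zero, intervalIntegral.integral_zero,
      sub_zero] at e
    have := (smul_eq_zero_iff_right hG).1 e.symm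
    exact (sub_eq_zero.1 this).symm
  · intro h x t s ht hs
    refine eq_zero_of_integral_eq (U := U x) ?_ ?_ ?_ ht hs
    · refine ContinuousOn.sub (continuousOn_const.smul ?_) (cN x)
      exact (adP x).cont.comp (f := fun p : ℝ × ℝ => p.1 + p.2) (by fun_prop)
        fun p hp => show (0:ℝ) < p.1 + p.2 from add_pos hp.1 hp.2
    · intro b
      obtain ⟨C, hC⟩ := bN x b
      obtain ⟨M, hM0, hM⟩ := hT.bound (b + b)
      have hα0 : 0 < α - 1 := by linarith
      have bP : ∀ r, 0 < r → r ≤ b + b →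
          ‖P 1 r x‖ ≤ M * ‖x‖ * ((b + b) ^ (α - 1) / (α - 1)) := by
        intro r hr hrb
        have ii : IntervalIntegrable (fun σ : ℝ => M * ‖x‖ * σ ^ (α - 1 - 1)) volume 0 r :=
          (intervalIntegral.intervalIntegrable_rpow' (by linarith)).const_mul _
        have e : P 1 r x = ∫ σ in (0:ℝ)..r, T σ x := by
          rw [← RLint_one]
          exact hP 1 r one_pos hr x
        rw [e]
        refine (intervalIntegral.norm_integral_le_of_norm_le hr.le
          (Eventually.of_forall fun σ hσ => ?_) ii).trans ?_
        · exact (hM σ hσ.1 (hσ.2.trans hrb) x).trans_eq (by ring)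
        · rw [intervalIntegral.integral_const_mul, integral_rpow (Or.inl (by linarith)),
            sub_add_cancel, Real.zero_rpow hα0.ne', sub_zero]
          gcongr
      refine ⟨Real.Gamma (2 - α) * (M * ‖x‖ * ((b + b) ^ (α - 1) / (α - 1))) + C,
        fun t s ht htb hs hsb => ?_⟩
      refine (norm_sub_le _ _).trans (add_le_add ?_ (hC t s ht htb hs hsb))
      rw [norm_smul, Real.norm_of_nonneg (Real.Gamma_pos_of_pos hδ).le]
      gcongr
      exact bP _ (add_pos ht hs) (add_le_add htb hsb)
    · intro t s ht hs
      rw [← sub_eq_zero, key x t s ht hs, h x t s ht hs, sub_self, smul_zero]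

end cosine

end aux

lemma tendsto_scale_iff {X : Type*} [NormedAddCommGroup X] [NormedSpace ℝ X] {G δ : ℝ}
    (hG : G ≠ 0) (f : ℝ → X) (x : X) :
    Tendsto (fun t : ℝ => t ^ δ • f t) (𝓝[>] (0:ℝ)) (𝓝 (G⁻¹ • x)) ↔
      Tendsto (fun t : ℝ => (G * t ^ δ) • f t) (𝓝[>] (0:ℝ)) (𝓝 x) := by
  constructor
  · intro h
    simpa only [smul_smul, mul_inv_cancel₀ hG, one_smul] using h.const_smul G
  · intro h
    simpa only [smul_smul, inv_mul_cancel_left₀ hG] using h.const_smul G⁻¹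

/-- `{T(t)}_{t>0}` is a Riemann-Liouville `α`-order fractional cosine function iff it
is a Riemann-Liouville `α`-order fractional resolvent. -/
theorem rl_frac_cosine_iff_resolvent
    {X : Type*} [NormedAddCommGroup X] [NormedSpace ℝ X] [CompleteSpace X]
    (α : ℝ) (hα : α ∈ Set.Ioo (1:ℝ) 2) (T : ℝ → X →L[ℝ] X) :
    IsRLFracCosine α T ↔ IsRLFracResolvent α T := by
  obtain ⟨h1, h2⟩ := hα
  have hγ : 0 < α - 1 := by linarith
  have hG : Real.Gamma (α - 1) ≠ 0 := (Real.Gamma_pos_of_pos hγ).ne'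
  have he : 1 - (α - 1) = 2 - α := by ring
  have key : (∀ x, ContinuousOn (fun t => T t x) (Ioi 0)) →
      (∀ x, Tendsto (fun t : ℝ => t ^ (2 - α) • T t x) (𝓝[>] 0)
        (𝓝 ((Real.Gamma (α - 1))⁻¹ • x))) →
      (CosEq α T ↔ ((∀ t > (0:ℝ), ∀ s > (0:ℝ), ∀ x : X, T s (T t x) = T t (T s x)) ∧
      (∀ x : X, ∀ t > (0:ℝ), ∀ s > (0:ℝ),
        T s (RLint α t (fun σ => T σ x)) - RLint α s (fun σ => T σ (T t x)) =
          (s ^ (α - 2) / Real.Gamma (α - 1)) • RLint α t (fun σ => T σ x) -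
          (t ^ (α - 2) / Real.Gamma (α - 1)) • RLint α s (fun σ => T σ x)))) := by
    intro hc hl
    have hT : RLFam (α - 1) T := RLFam.of_tendsto hc (c := (Real.Gamma (α - 1))⁻¹) (by rwa [he])
    obtain ⟨P, hP⟩ := hT.exists_op hγ
    rw [cosEq_iff_eqE h1 h2 hT hP, resolvent_iff_eqR h1 h2 hT hP, eqR_iff_eqE h1 h2 hT hP]
  constructor
  · rintro ⟨hc, hl, h⟩
    exact ⟨fun x => ⟨hc x, (tendsto_scale_iff hG _ x).1 (hl x)⟩, (key hc hl).1 h⟩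
  · rintro ⟨hcl, h⟩
    have hl := fun x => (tendsto_scale_iff hG _ x).2 (hcl x).2
    exact ⟨fun x => (hcl x).1, hl, (key (fun x => (hcl x).1) hl).2 h⟩
end

section
/- Let α ∈ (1,2), let X be a real Banach space, and let {T(t)}_{t>0} be a Riemann-Liouville α-order fractional resolvent on X that is exponentially bounded: there exist M ≥ 0 and ω ≥ 0 with ‖T(t)‖ ≤ M e^{ωt} t^{α-2} for t near 0 and ‖T(t)‖ ≤ M e^{ωt} for t ≥ 1 (so that the Laplace transform T̂(λ)x := ∫_0^∞ e^{-λt} T(t)x dt exists for λ > ω). Then for all real λ, μ > ω and every x ∈ X, (λ^{-α} − μ^{-α}) T̂(μ) T̂(λ)x = λ^{1-α} μ^{1-α} (λ^{-1} T̂(λ)x − μ^{-1} T̂(μ)x). -/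
/-!
Write `g s = s ^ (α - 2) / Γ(α - 1)`, whose Laplace transform is `lam ^ (1 - α)`, and recall that
the fractional integral of order `α` multiplies Laplace transforms by `lam ^ (-α)`
(`laplace_RLint`, a case of the convolution theorem). By commutativity, the term
`J_s^α T(s) T(t) x` of the resolvent equation equals `T(t) (J_s^α T(s) x)` (`RLint_comp`), so for
fixed `s` the Laplace transform of the equation in `t` reads
`lam ^ (-α) T(s) T̂(lam) x - T̂(lam) y_s = lam ^ (-α) g(s) T̂(lam) x - lam ^ (1 - α) y_s`
with `y_s = J_s^α T(s) x`. Since `T̂(lam)` is a bounded operator (`exists_laplaceCLM`),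
taking the Laplace transform in `s` at `mu` needs no Fubini argument, and `T̂(lam)` and `T̂(mu)` commute because
`T̂(lam)` commutes with every `T(s)`.

The uniform bound `‖T t‖ ≤ C e^{ωt} (t ^ (α - 2) + 1)` on all of `(0, ∞)` (`exists_norm_bound`)
combines the two growth hypotheses with the uniform boundedness principle on the compact interval
not covered by them.
-/

open MeasureTheory Filter Topology Set

/-- The Laplace transform `T̂(λ)x = ∫_0^∞ e^{-λt} T(t)x dt`. -/
noncomputable def LaplaceT {X : Type*} [NormedAddCommGroup X] [NormedSpace ℝ X]
    (T : ℝ → X →L[ℝ] X) (lam : ℝ) (x : X) : X :=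
  ∫ t in Set.Ioi (0:ℝ), Real.exp (-lam * t) • T t x

/-- The uniform boundedness principle on `[δ, 1]` fills the gap between the bound near `0` and the
bound on `[1, ∞)`. -/
lemma exists_norm_bound {X : Type*} [NormedAddCommGroup X] [NormedSpace ℝ X] [CompleteSpace X]
    {α : ℝ} {T : ℝ → X →L[ℝ] X}
    (hc : ∀ x : X, ContinuousOn (fun t => T t x) (Set.Ioi (0:ℝ)))
    {M ω : ℝ} (hM : 0 ≤ M) (hω : 0 ≤ ω)
    (hbd0 : ∀ᶠ t in 𝓝[>] (0:ℝ), ‖T t‖ ≤ M * Real.exp (ω * t) * t ^ (α - 2))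
    (hbd1 : ∀ t ≥ (1:ℝ), ‖T t‖ ≤ M * Real.exp (ω * t)) :
    ∃ C : ℝ, 0 ≤ C ∧ ∀ t > (0:ℝ), ‖T t‖ ≤ C * (Real.exp (ω * t) * (t ^ (α - 2) + 1)) := by
  obtain ⟨δ, hδ, hδb⟩ := mem_nhdsGT_iff_exists_Ioo_subset.1 hbd0
  have hδ' : (0:ℝ) < δ := hδ
  have hbs : ∃ C', ∀ i : Set.Icc δ 1, ‖T i‖ ≤ C' := by
    apply banach_steinhaus
    intro x
    obtain ⟨C, hC⟩ := isCompact_Icc.exists_bound_of_continuousOn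
      ((hc x).mono (fun t (ht : t ∈ Set.Icc δ 1) => lt_of_lt_of_le hδ' ht.1))
    exact ⟨C, fun i => hC i i.2⟩
  obtain ⟨C', hC'⟩ := hbs
  have h0 : 0 ≤ |C'| := abs_nonneg C'
  refine ⟨M + |C'|, by positivity, fun t ht => ?_⟩
  have h1 : 0 ≤ t ^ (α - 2) := Real.rpow_nonneg ht.le _
  have h2 : 1 ≤ Real.exp (ω * t) := Real.one_le_exp (by positivity)
  have h3 : 0 ≤ Real.exp (ω * t) * t ^ (α - 2) := by positivity
  have h4 : 0 ≤ M * Real.exp (ω * t) := by positivity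
  have h5 : 0 ≤ M * (Real.exp (ω * t) * t ^ (α - 2)) := by positivity
  have h6 : 0 ≤ |C'| * (Real.exp (ω * t) * t ^ (α - 2)) := by positivity
  have h7 : |C'| ≤ |C'| * Real.exp (ω * t) := le_mul_of_one_le_right h0 h2
  rcases lt_or_ge t δ with h | h
  · have := hδb ⟨ht, h⟩
    simp only [Set.mem_ofPred_eq] at this
    linarith
  · rcases le_or_gt t 1 with h' | h'
    · have := (hC' ⟨t, h, h'⟩).trans (le_abs_self C')
      simp only at this
      linarith
    · have := hbd1 t h'.le
      linarith

lemma integral_rpow_laplace {a lam : ℝ} (ha : 0 < a) (hlam : 0 < lam) :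
    ∫ t in Set.Ioi (0:ℝ), Real.exp (-lam * t) * t ^ (a - 1) = lam ^ (-a) * Real.Gamma a := by
  have := Real.integral_rpow_mul_exp_neg_mul_Ioi ha hlam
  rw [one_div, Real.inv_rpow hlam.le, ← Real.rpow_neg hlam.le] at this
  rw [← this]
  congr 1
  ext t
  rw [neg_mul, mul_comm]

lemma integrableOn_rpow_laplace {a lam : ℝ} (ha : 0 < a) (hlam : 0 < lam) :
    IntegrableOn (fun t : ℝ => Real.exp (-lam * t) * t ^ (a - 1)) (Set.Ioi (0:ℝ)) := by
  -- A nonzero Bochner integral forces integrability.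
  apply Integrable.of_integral_ne_zero
  rw [integral_rpow_laplace ha hlam]
  have := Real.Gamma_pos_of_pos ha
  positivity

/-- The damped fractional integral is the convolution of the damped kernel and the damped
function. -/
lemma exp_smul_RLint {X : Type*} [NormedAddCommGroup X] [NormedSpace ℝ X]
    (α lam t : ℝ) (f : ℝ → X) :
    Real.exp (-lam * t) • RLint α t f = (Real.Gamma α)⁻¹ •
      ∫ σ in (0:ℝ)..t, (ContinuousLinearMap.lsmul ℝ ℝ).flip (Real.exp (-lam * σ) • f σ)
        (Real.exp (-lam * (t - σ)) * (t - σ) ^ (α - 1)) := by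
  rw [RLint, smul_comm, ← intervalIntegral.integral_smul]
  congr 2
  ext σ
  simp only [ContinuousLinearMap.flip_apply, ContinuousLinearMap.lsmul_apply, smul_smul]
  congr 1
  rw [show -lam * t = -lam * (t - σ) + -lam * σ by ring, Real.exp_add]
  ring

lemma integrableOn_RLint {X : Type*} [NormedAddCommGroup X] [NormedSpace ℝ X] [CompleteSpace X]
    {α lam : ℝ} (hα : 0 < α) (hlam : 0 < lam) {f : ℝ → X}
    (hf : IntegrableOn (fun t => Real.exp (-lam * t) • f t) (Set.Ioi (0:ℝ))) :
    IntegrableOn (fun t => Real.exp (-lam * t) • RLint α t f) (Set.Ioi (0:ℝ)) := by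
  simp only [exp_smul_RLint]
  apply Integrable.smul
  have := integrable_posConvolution hf (integrableOn_rpow_laplace hα hlam)
    (ContinuousLinearMap.lsmul ℝ ℝ).flip
  unfold posConvolution at this
  exact (integrable_indicator_iff measurableSet_Ioi).1 this

lemma laplace_RLint {X : Type*} [NormedAddCommGroup X] [NormedSpace ℝ X] [CompleteSpace X]
    {α lam : ℝ} (hα : 0 < α) (hlam : 0 < lam) {f : ℝ → X}
    (hf : IntegrableOn (fun t => Real.exp (-lam * t) • f t) (Set.Ioi (0:ℝ))) :
    ∫ t in Set.Ioi (0:ℝ), Real.exp (-lam * t) • RLint α t f =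
      lam ^ (-α) • ∫ t in Set.Ioi (0:ℝ), Real.exp (-lam * t) • f t := by
  simp only [exp_smul_RLint]
  rw [integral_smul, integral_posConvolution hf (integrableOn_rpow_laplace hα hlam)
    (ContinuousLinearMap.lsmul ℝ ℝ).flip, integral_rpow_laplace hα hlam]
  simp only [ContinuousLinearMap.flip_apply, ContinuousLinearMap.lsmul_apply, smul_smul]
  congr 1
  have := (Real.Gamma_pos_of_pos hα).ne'
  field_simp

/-- Exponential boundedness gives absolute convergence of the Laplace integral, with a majorant
that depends on the vector only through its norm. -/
lemma exists_laplace_majorant {X : Type*} [NormedAddCommGroup X] [NormedSpace ℝ X]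
    {α : ℝ} (hα : 1 < α) {T : ℝ → X →L[ℝ] X} {C ω lam : ℝ} (hlam : ω < lam)
    (hb : ∀ t > (0:ℝ), ‖T t‖ ≤ C * (Real.exp (ω * t) * (t ^ (α - 2) + 1))) :
    ∃ h : ℝ → ℝ, IntegrableOn h (Set.Ioi (0:ℝ)) ∧
      ∀ t > (0:ℝ), ∀ x : X, ‖Real.exp (-lam * t) • T t x‖ ≤ h t * ‖x‖ := by
  refine ⟨fun t => C * (Real.exp (-(lam - ω) * t) * t ^ ((α - 1) - 1) +
    Real.exp (-(lam - ω) * t) * t ^ ((1:ℝ) - 1)), ?_, fun t ht x => ?_⟩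
  · exact ((integrableOn_rpow_laplace (by linarith) (by linarith)).add
      (integrableOn_rpow_laplace (by norm_num) (by linarith))).const_mul C
  · rw [norm_smul, Real.norm_eq_abs, abs_of_pos (Real.exp_pos _)]
    calc Real.exp (-lam * t) * ‖T t x‖
        ≤ Real.exp (-lam * t) * (C * (Real.exp (ω * t) * (t ^ (α - 2) + 1)) * ‖x‖) := by
          gcongr
          exact (T t).le_of_opNorm_le (hb t ht) x
      _ = _ := by
          beta_reduce
          rw [show -(lam - ω) * t = -lam * t + ω * t by ring, Real.exp_add,
            show α - 1 - 1 = α - 2 by ring, sub_self, Real.rpow_zero]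
          ring

lemma integrableOn_laplace {X : Type*} [NormedAddCommGroup X] [NormedSpace ℝ X]
    {T : ℝ → X →L[ℝ] X} {lam : ℝ}
    (hc : ∀ x : X, ContinuousOn (fun t => T t x) (Set.Ioi (0:ℝ)))
    {h : ℝ → ℝ} (hi : IntegrableOn h (Set.Ioi (0:ℝ)))
    (hb : ∀ t > (0:ℝ), ∀ x : X, ‖Real.exp (-lam * t) • T t x‖ ≤ h t * ‖x‖) (x : X) :
    IntegrableOn (fun t => Real.exp (-lam * t) • T t x) (Set.Ioi (0:ℝ)) := by
  refine Integrable.mono' (hi.mul_const ‖x‖) ?_ ?_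
  · refine ContinuousOn.aestronglyMeasurable ?_ measurableSet_Ioi
    exact ContinuousOn.smul (by fun_prop) (hc x)
  · exact (ae_restrict_iff' measurableSet_Ioi).2 (ae_of_all _ fun t ht => hb t ht x)

/-- `T̂(lam)` is a bounded operator. -/
lemma exists_laplaceCLM {X : Type*} [NormedAddCommGroup X] [NormedSpace ℝ X]
    {T : ℝ → X →L[ℝ] X} {lam : ℝ}
    (hc : ∀ x : X, ContinuousOn (fun t => T t x) (Set.Ioi (0:ℝ)))
    {h : ℝ → ℝ} (hi : IntegrableOn h (Set.Ioi (0:ℝ)))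
    (hb : ∀ t > (0:ℝ), ∀ x : X, ‖Real.exp (-lam * t) • T t x‖ ≤ h t * ‖x‖) :
    ∃ L : X →L[ℝ] X, ∀ x, L x = LaplaceT T lam x := by
  have hint := integrableOn_laplace hc hi hb
  let l : X →ₗ[ℝ] X :=
    { toFun := LaplaceT T lam
      map_add' := fun x y => by
        simp only [LaplaceT, map_add, smul_add]
        exact integral_add (hint x) (hint y)
      map_smul' := fun c x => by
        simp only [LaplaceT, map_smul, RingHom.id_apply]
        rw [← integral_smul]
        simp only [smul_comm c] }
  refine ⟨l.mkContinuous (∫ t in Set.Ioi (0:ℝ), h t) fun x => ?_, fun x => rfl⟩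
  rw [← integral_mul_const]
  exact norm_integral_le_of_norm_le (hi.mul_const _)
    ((ae_restrict_iff' measurableSet_Ioi).2 (ae_of_all _ fun t ht => hb t ht x))

/-- A bounded operator commuting with the family can be pulled out of the fractional integral. -/
lemma RLint_comp {X : Type*} [NormedAddCommGroup X] [NormedSpace ℝ X] [CompleteSpace X]
    {α lam s : ℝ} (hα : 1 < α) (hs : 0 < s) {T : ℝ → X →L[ℝ] X} {S : X →L[ℝ] X} {x : X}
    (hcomm : ∀ σ > (0:ℝ), T σ (S x) = S (T σ x))
    (hf : IntegrableOn (fun t => Real.exp (-lam * t) • T t x) (Set.Ioi (0:ℝ))) :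
    RLint α s (fun σ => T σ (S x)) = S (RLint α s (fun σ => T σ x)) := by
  have hII : IntervalIntegrable (fun t => Real.exp (-lam * t) • T t x) volume 0 s :=
    (intervalIntegrable_iff_integrableOn_Ioc_of_le hs.le).2 (hf.mono_set Set.Ioc_subset_Ioi_self)
  have hk : Continuous fun σ : ℝ => (s - σ) ^ (α - 1) * Real.exp (lam * σ) :=
    ((continuous_const.sub continuous_id).rpow_const fun _ => Or.inr (by linarith)).mul
      (by fun_prop)
  have hII' : IntervalIntegrable (fun σ => (s - σ) ^ (α - 1) • T σ x) volume 0 s := by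
    refine (hII.continuousOn_smul hk.continuousOn).congr (fun σ _ => ?_)
    simp only [smul_smul, mul_assoc, ← Real.exp_add]
    simp
  rw [RLint, RLint, map_smul, ← ContinuousLinearMap.intervalIntegral_comp_comm _ hII']
  congr 1
  apply intervalIntegral.integral_congr_ae
  refine ae_of_all _ fun σ hσ => ?_
  rw [Set.uIoc_of_le hs.le] at hσ
  rw [hcomm σ hσ.1, map_smul]

lemma laplace_comm {X : Type*} [NormedAddCommGroup X] [NormedSpace ℝ X] [CompleteSpace X]
    {lam : ℝ} {T : ℝ → X →L[ℝ] X} {S : X →L[ℝ] X} {x : X}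
    (hcomm : ∀ σ > (0:ℝ), T σ (S x) = S (T σ x))
    (hf : IntegrableOn (fun t => Real.exp (-lam * t) • T t x) (Set.Ioi (0:ℝ))) :
    LaplaceT T lam (S x) = S (LaplaceT T lam x) := by
  rw [LaplaceT, LaplaceT, ← ContinuousLinearMap.integral_comp_comm _ hf]
  refine setIntegral_congr_fun measurableSet_Ioi fun σ hσ => ?_
  simp only [map_smul]
  rw [hcomm σ hσ]

/-- The Laplace transform of `t ^ (α - 2) / Γ(α - 1)`, in the form in which it multiplies a
vector. -/
lemma laplace_kernel_smul {X : Type*} [NormedAddCommGroup X] [NormedSpace ℝ X] [CompleteSpace X]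
    {α lam : ℝ} (hα : 1 < α) (hlam : 0 < lam) (y : X) :
    IntegrableOn (fun t : ℝ => Real.exp (-lam * t) • (t ^ (α - 2) / Real.Gamma (α - 1)) • y)
      (Set.Ioi (0:ℝ)) ∧
    ∫ t in Set.Ioi (0:ℝ), Real.exp (-lam * t) • (t ^ (α - 2) / Real.Gamma (α - 1)) • y =
      lam ^ (1 - α) • y := by
  have hα' : 0 < α - 1 := by linarith
  have hG := (Real.Gamma_pos_of_pos hα').ne'
  have e : (fun t : ℝ => Real.exp (-lam * t) • (t ^ (α - 2) / Real.Gamma (α - 1)) • y) =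
      fun t : ℝ => (Real.exp (-lam * t) * t ^ ((α - 1) - 1)) • (Real.Gamma (α - 1))⁻¹ • y := by
    ext t
    rw [smul_smul, smul_smul, show α - 1 - 1 = α - 2 by ring]
    congr 1
    ring
  rw [e]
  refine ⟨(integrableOn_rpow_laplace hα' hlam).smul_const _, ?_⟩
  rw [integral_smul_const, integral_rpow_laplace hα' hlam, smul_smul, mul_assoc,
    mul_inv_cancel₀ hG, mul_one, neg_sub]

/-- For an exponentially bounded Riemann-Liouville `α`-order fractional resolvent,
`(λ^{-α} − μ^{-α}) T̂(μ)T̂(λ)x = λ^{1-α} μ^{1-α} (λ^{-1} T̂(λ)x − μ^{-1} T̂(μ)x)`. -/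
theorem rl_frac_resolvent_laplace_identity
    {X : Type*} [NormedAddCommGroup X] [NormedSpace ℝ X] [CompleteSpace X]
    (α : ℝ) (hα : α ∈ Set.Ioo (1:ℝ) 2) (T : ℝ → X →L[ℝ] X)
    (hT : IsRLFracResolvent α T)
    (M ω : ℝ) (hM : 0 ≤ M) (hω : 0 ≤ ω)
    (hbd0 : ∀ᶠ t in 𝓝[>] (0:ℝ), ‖T t‖ ≤ M * Real.exp (ω * t) * t ^ (α - 2))
    (hbd1 : ∀ t ≥ (1:ℝ), ‖T t‖ ≤ M * Real.exp (ω * t)) :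
    ∀ lam mu : ℝ, ω < lam → ω < mu → ∀ x : X,
      (lam ^ (-α) - mu ^ (-α)) • LaplaceT T mu (LaplaceT T lam x) =
        (lam ^ (1 - α) * mu ^ (1 - α)) •
          (lam⁻¹ • LaplaceT T lam x - mu⁻¹ • LaplaceT T mu x) := by
  obtain ⟨hα1, -⟩ := hα
  obtain ⟨h1, hcomm, hres⟩ := hT
  have hc := fun x => (h1 x).1
  obtain ⟨C, -, hC⟩ := exists_norm_bound hc hM hω hbd0 hbd1
  intro lam mu hlam hmu x
  have hα0 : 0 < α := by linarith
  have hlam0 : 0 < lam := by linarith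
  have hmu0 : 0 < mu := by linarith
  obtain ⟨h, hi, hb⟩ := exists_laplace_majorant hα1 hlam hC
  obtain ⟨k, ki, kb⟩ := exists_laplace_majorant hα1 hmu hC
  have hint := integrableOn_laplace hc hi hb
  have kint := integrableOn_laplace hc ki kb
  obtain ⟨L, hL⟩ := exists_laplaceCLM hc hi hb
  have hLT : ∀ s > (0:ℝ), ∀ y, T s (L y) = L (T s y) := fun s hs y => by
    rw [hL, hL, laplace_comm (fun σ hσ => hcomm s hs σ hσ y) (hint y)]
  -- The resolvent equation, transformed in `t` at `lam`.
  have step1 : ∀ s > (0:ℝ),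
      lam ^ (-α) • T s (L x) - L (RLint α s (fun σ => T σ x)) =
        lam ^ (-α) • (s ^ (α - 2) / Real.Gamma (α - 1)) • L x -
          lam ^ (1 - α) • RLint α s (fun σ => T σ x) := by
    intro s hs
    set y := RLint α s (fun σ => T σ x) with hy
    have hR := integrableOn_RLint hα0 hlam0 (hint x)
    have hRL : ∫ t in Set.Ioi (0:ℝ), Real.exp (-lam * t) • RLint α t (fun σ => T σ x) =
        lam ^ (-α) • L x := by
      rw [laplace_RLint hα0 hlam0 (hint x), hL]; rfl
    have hK := laplace_kernel_smul hα1 hlam0 y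
    have key : ∫ t in Set.Ioi (0:ℝ), (T s (Real.exp (-lam * t) • RLint α t (fun σ => T σ x)) -
          Real.exp (-lam * t) • T t y) =
        ∫ t in Set.Ioi (0:ℝ), ((s ^ (α - 2) / Real.Gamma (α - 1)) •
          (Real.exp (-lam * t) • RLint α t (fun σ => T σ x)) -
          Real.exp (-lam * t) • (t ^ (α - 2) / Real.Gamma (α - 1)) • y) := by
      refine setIntegral_congr_fun measurableSet_Ioi fun t ht => ?_
      have e := hres x t ht s hs
      rw [RLint_comp hα1 hs (fun σ hσ => hcomm t ht σ hσ x) (hint x), ← hy] at e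
      simp only [map_smul]
      rw [← smul_sub, e, smul_sub, smul_comm (Real.exp (-lam * t)) (s ^ (α - 2) / _)]
    rw [integral_sub ((T s).integrable_comp hR) (hint y),
      integral_sub (Integrable.fun_smul _ hR) hK.1, integral_smul, hK.2,
      ContinuousLinearMap.integral_comp_comm _ hR, hRL, map_smul] at key
    rw [hL y, LaplaceT, key, smul_comm]
  have kR := integrableOn_RLint hα0 hmu0 (kint x)
  have kRL : ∫ t in Set.Ioi (0:ℝ), Real.exp (-mu * t) • RLint α t (fun σ => T σ x) =
      mu ^ (-α) • LaplaceT T mu x := laplace_RLint hα0 hmu0 (kint x)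
  have kK := laplace_kernel_smul hα1 hmu0 (L x)
  -- The equation `step1`, transformed in `s` at `mu`.
  have key : ∫ s in Set.Ioi (0:ℝ), (lam ^ (-α) • (Real.exp (-mu * s) • T s (L x)) -
        L (Real.exp (-mu * s) • RLint α s (fun σ => T σ x))) =
      ∫ s in Set.Ioi (0:ℝ), (lam ^ (-α) •
        (Real.exp (-mu * s) • (s ^ (α - 2) / Real.Gamma (α - 1)) • L x) -
        lam ^ (1 - α) • (Real.exp (-mu * s) • RLint α s (fun σ => T σ x))) := by
    refine setIntegral_congr_fun measurableSet_Ioi fun s hs => ?_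
    simp only [map_smul]
    rw [smul_comm (lam ^ (-α)) (Real.exp (-mu * s)), smul_comm (lam ^ (-α)) (Real.exp (-mu * s)),
      smul_comm (lam ^ (1 - α)) (Real.exp (-mu * s)), ← smul_sub, ← smul_sub, step1 s hs]
  rw [integral_sub (Integrable.fun_smul _ (kint (L x))) (L.integrable_comp kR),
    integral_sub (Integrable.fun_smul _ kK.1) (Integrable.fun_smul _ kR),
    integral_smul, integral_smul, integral_smul, kK.2,
    ContinuousLinearMap.integral_comp_comm _ kR, kRL, map_smul,
    ← laplace_comm (fun σ hσ => hLT σ hσ x) (kint x)] at key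
  change lam ^ (-α) • LaplaceT T mu (L x) - mu ^ (-α) • LaplaceT T mu (L x) = _ at key
  rw [← hL x, sub_smul, key, smul_sub]
  simp only [smul_smul]
  have p : ∀ r : ℝ, 0 < r → r ^ (-α) = r ^ (1 - α) * r⁻¹ := fun r hr => by
    rw [← Real.rpow_neg_one r, ← Real.rpow_add hr]
    congr 1
    ring
  rw [p lam hlam0, p mu hmu0]
  congr 2 <;> ring
end

section
/- Let α ∈ (1,2), let X be a real Banach space, let f : (0,∞) → X be continuous, and suppose lim_{t→0+} t^{2-α} f(t) = y for some y ∈ X. Then lim_{r→0+} Γ(α+1) r^{-α} ∫_0^r (r-σ) f(σ) dσ = Γ(α-1) y. -/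
/-!
Substituting `σ = r s` turns `r ^ (-α) • ∫ σ in 0..r, (r - σ) • f σ` into
`∫ s in 0..1, ((1 - s) * s ^ (α - 2)) • h (r * s)`, where `h t = t ^ (2 - α) • f t`. Since `h → y`
at `0+`, `h` is bounded near `0+`, and the weight is dominated by `s ^ (α - 2)`, integrable on
`(0, 1)` because `α > 1`. Dominated convergence gives the limit
`(∫ s in 0..1, (1 - s) * s ^ (α - 2)) • y = (1 / ((α - 1) * α)) • y`, and the constants match
because `Γ(α + 1) = α (α - 1) Γ(α - 1)`.
-/

open MeasureTheory Filter Topology Set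

lemma integral_weight {α : ℝ} (hα : 1 < α) :
    ∫ s in (0:ℝ)..1, (1 - s) * s ^ (α - 2) = 1 / ((α - 1) * α) := by
  have h : ∫ s in (0:ℝ)..1, (1 - s) * s ^ (α - 2)
      = ∫ s in (0:ℝ)..1, (s ^ (α - 2) - s ^ (α - 1)) := by
    refine intervalIntegral.integral_congr_ae (ae_of_all _ fun s hs => ?_)
    rw [uIoc_of_le zero_le_one] at hs
    have h2 : s ^ (α - 1) = s ^ (α - 2) * s := by
      rw [← Real.rpow_add_one hs.1.ne']; congr 1; ring
    rw [h2]; ring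
  rw [h, intervalIntegral.integral_sub
    (intervalIntegral.intervalIntegrable_rpow' (by linarith))
    (intervalIntegral.intervalIntegrable_rpow' (by linarith)),
    integral_rpow (Or.inl (by linarith)), integral_rpow (Or.inl (by linarith))]
  have h1 : α - 1 ≠ 0 := by linarith
  have h0 : α ≠ 0 := by linarith
  have e1 : α - 2 + 1 = α - 1 := by ring
  have e2 : α - 1 + 1 = α := by ring
  rw [e1, e2, Real.zero_rpow h1, Real.zero_rpow h0, Real.one_rpow, Real.one_rpow]
  field_simp
  ring

lemma rpow_smul_integral_eq {X : Type*} [NormedAddCommGroup X] [NormedSpace ℝ X]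
    (α : ℝ) (f : ℝ → X) {r : ℝ} (hr : 0 < r) :
    r ^ (-α) • ∫ σ in (0:ℝ)..r, (r - σ) • f σ
      = ∫ s in (0:ℝ)..1, ((1 - s) * s ^ (α - 2)) • ((r * s) ^ (2 - α) • f (r * s)) := by
  have h := intervalIntegral.smul_integral_comp_mul_left
    (a := 0) (b := 1) (fun σ => (r - σ) • f σ) r
  rw [mul_zero, mul_one] at h
  rw [← h, smul_smul, ← intervalIntegral.integral_smul]
  refine intervalIntegral.integral_congr_ae (ae_of_all _ fun s hs => ?_)
  rw [uIoc_of_le zero_le_one] at hs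
  simp only [smul_smul]
  congr 1
  rw [Real.mul_rpow hr.le hs.1.le]
  have e1 : s ^ (α - 2) * s ^ (2 - α) = 1 := by
    rw [← Real.rpow_add hs.1]; simp
  have e2 : r ^ (2 - α) = r ^ (-α) * r * r := by
    rw [← Real.rpow_add_one hr.ne', ← Real.rpow_add_one hr.ne']; congr 1; ring
  rw [e2]
  linear_combination (-(1 - s) * r ^ (-α) * r * r) * e1

/-- If `f` is continuous on `(0,∞)` and `t^{2-α} f(t) → y` as `t → 0+`, then
`Γ(α+1) r^{-α} ∫_0^r (r-σ) f(σ) dσ → Γ(α-1) y` as `r → 0+`. -/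
theorem limit_of_double_primitive
    {X : Type*} [NormedAddCommGroup X] [NormedSpace ℝ X] [CompleteSpace X]
    (α : ℝ) (hα : α ∈ Set.Ioo (1:ℝ) 2) (f : ℝ → X) (y : X)
    (hcont : ContinuousOn f (Set.Ioi (0:ℝ)))
    (hlim : Tendsto (fun t : ℝ => t ^ (2 - α) • f t) (𝓝[>] (0:ℝ)) (𝓝 y)) :
    Tendsto (fun r : ℝ =>
        (Real.Gamma (α + 1) * r ^ (-α)) • ∫ σ in (0:ℝ)..r, (r - σ) • f σ)
      (𝓝[>] (0:ℝ)) (𝓝 (Real.Gamma (α - 1) • y)) := by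
  obtain ⟨hα1, -⟩ := hα
  have key : Tendsto (fun r : ℝ =>
      ∫ s in (0:ℝ)..1, ((1 - s) * s ^ (α - 2)) • ((r * s) ^ (2 - α) • f (r * s)))
      (𝓝[>] (0:ℝ)) (𝓝 (∫ s in (0:ℝ)..1, ((1 - s) * s ^ (α - 2)) • y)) := by
    obtain ⟨δ, hδ, hbd⟩ : ∃ δ > (0:ℝ), ∀ t ∈ Ioo 0 δ, ‖t ^ (2 - α) • f t‖ ≤ ‖y‖ + 1 := by
      have := hlim.norm.eventually (eventually_le_nhds (lt_add_one ‖y‖))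
      obtain ⟨δ, hδ, h⟩ := mem_nhdsGT_iff_exists_Ioo_subset.1 this
      exact ⟨δ, hδ, fun t ht => h ht⟩
    refine intervalIntegral.tendsto_integral_filter_of_dominated_convergence
      (fun s => s ^ (α - 2) * (‖y‖ + 1)) ?_ ?_ ?_ ?_
    · filter_upwards [self_mem_nhdsWithin] with r (hr : 0 < r)
      rw [uIoc_of_le zero_le_one]
      refine ContinuousOn.aestronglyMeasurable (fun s hs => ?_) measurableSet_Ioc
      have hrs : 0 < r * s := mul_pos hr hs.1
      have hf : ContinuousAt (fun s => f (r * s)) s :=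
        ContinuousAt.comp (f := fun s => r * s) (hcont.continuousAt (Ioi_mem_nhds hrs))
          (by fun_prop)
      have h1 : ContinuousAt (fun s : ℝ => s ^ (α - 2)) s :=
        Real.continuousAt_rpow_const _ _ (Or.inl hs.1.ne')
      have h2 : ContinuousAt (fun s : ℝ => (r * s) ^ (2 - α)) s :=
        ContinuousAt.rpow_const (by fun_prop) (Or.inl hrs.ne')
      have h3 : ContinuousAt (fun s : ℝ => 1 - s) s := by fun_prop
      exact ((h3.mul h1).smul (h2.smul hf)).continuousWithinAt
    · filter_upwards [Ioo_mem_nhdsGT hδ] with r hr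
      refine ae_of_all _ fun s hs => ?_
      rw [uIoc_of_le zero_le_one] at hs
      have hs0 : 0 ≤ s ^ (α - 2) := Real.rpow_nonneg hs.1.le _
      rw [norm_smul, Real.norm_of_nonneg (mul_nonneg (by linarith [hs.2]) hs0)]
      have hb := hbd (r * s) ⟨mul_pos hr.1 hs.1, by nlinarith [hr.1, hr.2, hs.1, hs.2]⟩
      refine mul_le_mul ?_ hb (norm_nonneg _) hs0
      exact mul_le_of_le_one_left hs0 (by linarith [hs.1])
    · exact (intervalIntegral.intervalIntegrable_rpow' (by linarith)).mul_const _
    · refine ae_of_all _ fun s hs => ?_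
      rw [uIoc_of_le zero_le_one] at hs
      refine Tendsto.const_smul (hlim.comp (?_ : Tendsto (fun r => r * s) _ _)) _
      refine tendsto_nhdsWithin_iff.2 ⟨?_, ?_⟩
      · have : Tendsto (fun r : ℝ => r * s) (𝓝 0) (𝓝 (0 * s)) :=
          (continuous_mul_const s).tendsto 0
        rw [zero_mul] at this
        exact this.mono_left nhdsWithin_le_nhds
      · filter_upwards [self_mem_nhdsWithin] with r (hr : 0 < r)
        exact mul_pos hr hs.1
  rw [intervalIntegral.integral_smul_const, integral_weight hα1] at key
  have hΓ : Real.Gamma (α + 1) * (1 / ((α - 1) * α)) = Real.Gamma (α - 1) := by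
    have h1 : α - 1 ≠ 0 := by linarith
    have h0 : α ≠ 0 := by linarith
    have e : Real.Gamma α = (α - 1) * Real.Gamma (α - 1) := by
      simpa using Real.Gamma_add_one h1
    rw [Real.Gamma_add_one h0, e]
    field_simp
  rw [← hΓ, mul_smul]
  refine (key.const_smul (Real.Gamma (α + 1))).congr' ?_
  filter_upwards [self_mem_nhdsWithin] with r (hr : 0 < r)
  rw [mul_smul, rpow_smul_integral_eq α f hr]
end

section
/- Let α ∈ (1,2), let X be a real Banach space, let f : (0,∞) → X be continuous, and suppose lim_{t→0+} t^{2-α} f(t) = y for some y ∈ X. Then lim_{t→0+} Γ(2α-1) t^{2-2α} J_t^α f(t) = Γ(α-1) y, where J_t^α f(t) := (1/Γ(α)) ∫_0^t (t-σ)^{α-1} f(σ) dσ. -/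
/-!
The substitution `σ = t s` turns `t ^ (2 - 2α) ∫₀ᵗ (t - σ) ^ (α - 1) f σ dσ` into
`∫₀¹ (1 - s) ^ (α - 1) s ^ (α - 2) g (t s) ds` with `g r = r ^ (2 - α) f r`. As `t → 0+` one has
`g (t s) → y` for each `s ∈ (0, 1]`, and `g` is bounded near `0+`, so dominated convergence with
dominating function `C s ^ (α - 2)` gives the limit `B(α - 1, α) y`, where
`B(α - 1, α) = Γ(α - 1) Γ(α) / Γ(2α - 1)`.
-/

open MeasureTheory Filter Topology Set

lemma integral_beta_real (α : ℝ) (hα : 1 < α) :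
    ∫ s in (0:ℝ)..1, (1 - s) ^ (α - 1) * s ^ (α - 2) =
      Real.Gamma (α - 1) * Real.Gamma α / Real.Gamma (2 * α - 1) := by
  have h := ProbabilityTheory.beta_eq_betaIntegralReal (α - 1) α (by linarith) (by linarith)
  rw [ProbabilityTheory.beta, show α - 1 + α = 2 * α - 1 by ring] at h
  rw [h, Complex.betaIntegral]
  have hcast : ∀ s ∈ Set.uIcc (0:ℝ) 1,
      (s : ℂ) ^ (((α - 1 : ℝ) : ℂ) - 1) * (1 - (s : ℂ)) ^ ((α : ℂ) - 1) =
        (((1 - s) ^ (α - 1) * s ^ (α - 2) : ℝ) : ℂ) := by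
    intro s hs
    rw [Set.uIcc_of_le zero_le_one] at hs
    rw [Complex.ofReal_mul, Complex.ofReal_cpow (by linarith [hs.2]), Complex.ofReal_cpow hs.1,
      mul_comm]
    congr 2
    · push_cast; ring
    · push_cast; ring
    · push_cast; ring
  rw [intervalIntegral.integral_congr hcast, intervalIntegral.integral_ofReal, Complex.ofReal_re]

lemma rescaled_integral {X : Type*} [NormedAddCommGroup X] [NormedSpace ℝ X]
    (α : ℝ) (f : ℝ → X) {t : ℝ} (ht : 0 < t) :
    t ^ (2 - 2 * α) • ∫ σ in (0:ℝ)..t, (t - σ) ^ (α - 1) • f σ =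
      ∫ s in (0:ℝ)..1, ((1 - s) ^ (α - 1) * s ^ (α - 2)) • ((t * s) ^ (2 - α) • f (t * s)) := by
  have h := intervalIntegral.smul_integral_comp_mul_left (a := 0) (b := 1)
    (fun σ => (t - σ) ^ (α - 1) • f σ) t
  rw [mul_zero, mul_one] at h
  rw [← h, smul_smul, ← intervalIntegral.integral_smul]
  refine intervalIntegral.integral_congr_ae (Eventually.of_forall fun s hs => ?_)
  rw [Set.uIoc_of_le zero_le_one] at hs
  have hs0 := hs.1
  have hpow : t ^ (2 - 2 * α) * t * t ^ (α - 1) = t ^ (2 - α) := by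
    nth_rewrite 2 [← Real.rpow_one t]
    rw [← Real.rpow_add ht, ← Real.rpow_add ht]
    congr 1; ring
  have hone : s ^ (α - 2) * s ^ (2 - α) = 1 := by
    rw [← Real.rpow_add hs0]; simp
  simp only [smul_smul]
  congr 1
  rw [show t - t * s = t * (1 - s) by ring, Real.mul_rpow ht.le (by linarith [hs.2]),
    Real.mul_rpow ht.le hs0.le, ← hpow]
  linear_combination (-(t ^ (2 - 2 * α) * t * t ^ (α - 1) * (1 - s) ^ (α - 1))) * hone

/-- Dominated convergence for the rescaled integral; the dominating function is
`(‖y‖ + 1) s ^ (α - 2)`, integrable because `α - 2 > -1`. -/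
lemma tendsto_rescaled {X : Type*} [NormedAddCommGroup X] [NormedSpace ℝ X]
    (α : ℝ) (hα : 1 < α) (g : ℝ → X) (y : X)
    (hcont : ContinuousOn g (Set.Ioi (0:ℝ))) (hlim : Tendsto g (𝓝[>] (0:ℝ)) (𝓝 y)) :
    Tendsto (fun t : ℝ => ∫ s in (0:ℝ)..1, ((1 - s) ^ (α - 1) * s ^ (α - 2)) • g (t * s))
      (𝓝[>] (0:ℝ)) (𝓝 (∫ s in (0:ℝ)..1, ((1 - s) ^ (α - 1) * s ^ (α - 2)) • y)) := by
  obtain ⟨δ, hδ, hbd⟩ : ∃ δ > 0, ∀ r ∈ Set.Ioo (0:ℝ) δ, ‖g r‖ < ‖y‖ + 1 := by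
    have h := hlim.norm.eventually_lt_const (lt_add_one ‖y‖)
    obtain ⟨δ, hδ, h⟩ := mem_nhdsGT_iff_exists_Ioo_subset.1 h
    exact ⟨δ, hδ, h⟩
  refine intervalIntegral.tendsto_integral_filter_of_dominated_convergence
    (fun s => s ^ (α - 2) * (‖y‖ + 1)) ?_ ?_ ?_ ?_
  · filter_upwards [self_mem_nhdsWithin] with t ht
    rw [Set.uIoc_of_le zero_le_one]
    refine AEStronglyMeasurable.smul (by fun_prop) ?_
    refine ContinuousOn.aestronglyMeasurable ?_ measurableSet_Ioc
    exact hcont.comp (by fun_prop) fun s hs => mul_pos ht hs.1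
  · filter_upwards [Ioo_mem_nhdsGT hδ] with t ht
    refine Eventually.of_forall fun s hs => ?_
    rw [Set.uIoc_of_le zero_le_one] at hs
    have h1 : 0 ≤ 1 - s := by linarith [hs.2]
    have hs2 := Real.rpow_nonneg hs.1.le (α - 2)
    have hg := hbd (t * s) ⟨mul_pos ht.1 hs.1, by nlinarith [ht.1, ht.2, hs.1, hs.2]⟩
    have h2 : (1 - s) ^ (α - 1) ≤ 1 :=
      Real.rpow_le_one h1 (by linarith [hs.1]) (by linarith)
    rw [norm_smul, norm_mul, Real.norm_of_nonneg (Real.rpow_nonneg h1 _), Real.norm_of_nonneg hs2]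
    exact mul_le_mul (mul_le_of_le_one_left hs2 h2) hg.le (norm_nonneg _) hs2
  · exact (intervalIntegral.intervalIntegrable_rpow' (by linarith)).mul_const _
  · refine Eventually.of_forall fun s hs => ?_
    rw [Set.uIoc_of_le zero_le_one] at hs
    refine Tendsto.const_smul (hlim.comp ?_) _
    refine tendsto_nhdsWithin_iff.2 ⟨?_, ?_⟩
    · have : Tendsto (fun t : ℝ => t * s) (𝓝 0) (𝓝 (0 * s)) := tendsto_id.mul_const s
      rw [zero_mul] at this
      exact this.mono_left nhdsWithin_le_nhds
    · filter_upwards [self_mem_nhdsWithin] with t ht using mul_pos ht hs.1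

/-- If `f` is continuous on `(0,∞)` and `t^{2-α} f(t) → y` as `t → 0+`, then
`Γ(2α-1) t^{2-2α} J_t^α f(t) → Γ(α-1) y` as `t → 0+`. -/
theorem limit_of_fractional_integral
    {X : Type*} [NormedAddCommGroup X] [NormedSpace ℝ X] [CompleteSpace X]
    (α : ℝ) (hα : α ∈ Set.Ioo (1:ℝ) 2) (f : ℝ → X) (y : X)
    (hcont : ContinuousOn f (Set.Ioi (0:ℝ)))
    (hlim : Tendsto (fun t : ℝ => t ^ (2 - α) • f t) (𝓝[>] (0:ℝ)) (𝓝 y)) :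
    Tendsto (fun t : ℝ => (Real.Gamma (2 * α - 1) * t ^ (2 - 2 * α)) • RLint α t f)
      (𝓝[>] (0:ℝ)) (𝓝 (Real.Gamma (α - 1) • y)) := by
  obtain ⟨h1, -⟩ := hα
  have hG1 : Real.Gamma α ≠ 0 := (Real.Gamma_pos_of_pos (by linarith)).ne'
  have hG2 : Real.Gamma (2 * α - 1) ≠ 0 := (Real.Gamma_pos_of_pos (by linarith)).ne'
  have hg : ContinuousOn (fun t : ℝ => t ^ (2 - α) • f t) (Set.Ioi (0:ℝ)) :=
    (continuousOn_id.rpow_const fun t ht => Or.inl (ne_of_gt ht)).smul hcont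
  have key := (tendsto_rescaled α h1 _ y hg hlim).const_smul
    (Real.Gamma (2 * α - 1) * (Real.Gamma α)⁻¹)
  rw [intervalIntegral.integral_smul_const, integral_beta_real α h1, smul_smul] at key
  have hconst : Real.Gamma (2 * α - 1) * (Real.Gamma α)⁻¹ *
      (Real.Gamma (α - 1) * Real.Gamma α / Real.Gamma (2 * α - 1)) = Real.Gamma (α - 1) := by
    field_simp
  rw [hconst] at key
  refine key.congr' ?_
  filter_upwards [self_mem_nhdsWithin] with t ht
  rw [← rescaled_integral α f ht, RLint, smul_smul, smul_smul]
  congr 1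
  ring
end
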